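/- arXiv:0907.4294 — 3 statements merged into one kernel-verified Lean document; each statement's English description precedes it below -/
import Mathlib

section
/- Let ξ₀ be the unique positive zero of t ↦ 1 − t·tanh(t). (i) For every smooth function f : ℝ × ℝ → ℝ which is 2π-periodic in its second variable θ and whose support is contained in K × ℝ for some compact set K ⊂ (−ξ₀, ξ₀), one has ∫₀^{2π} ∫_{−ξ₀}^{ξ₀} ( (∂_t f)² + (∂_θ f)² − 2·cosh(t)^{−2}·f² ) dt dθ ≥ 0. (ii) For every ε > 0 there exists a smooth compactly supported function g : ℝ → ℝ with support contained in (−ξ₀ − ε, ξ₀ + ε) such that ∫_ℝ ( g'(t)² − 2·cosh(t)^{−2}·g(t)² ) dt < 0. -/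
open Real MeasureTheory Set Filter Topology

/-!
Stability of a Schrödinger form `∫ h'² - q h²` is decided by one-sided solutions of `u'' + q u = 0`.
A positive supersolution `u` on an interval gives Picone's inequality
`(h² u' / u)' ≤ h'² - q h²`, hence nonnegativity; a compactly supported nonnegative subsolution `g`
that is strict at a point of positivity has `∫ g'² - q g² = -∫ g (g'' + q g) < 0`.

On the catenoid both come from the Jacobi field `u = 1 - t tanh t`, which is even and strictly
decreasing in `|t|`. It is positive for `|t| < ξ₀`. If `r > ξ₀`, then `u r < 0`, and
`w = 1 - u / u r` is positive exactly for `|t| < r` and satisfies `w'' + q w = q`. The positive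
part of `w`, smoothed by a convex ramp, is then a subsolution supported in `|t| ≤ r`.
-/

section StabilityCriteria

lemma hasDerivAt_picone {u u' h : ℝ → ℝ} {u'' h' t : ℝ} (hu : HasDerivAt u (u' t) t)
    (hu' : HasDerivAt u' u'' t) (hh : HasDerivAt h h' t) (hut : u t ≠ 0) :
    HasDerivAt (fun s => u' s / u s * h s ^ 2)
      (h' ^ 2 + u'' / u t * h t ^ 2 - (h' - u' t / u t * h t) ^ 2) t := by
  refine ((hu'.div hu hut).mul (hh.pow 2)).congr_deriv ?_
  simp only [Pi.div_apply, Pi.pow_apply]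
  field_simp
  ring

theorem integral_deriv_sq_sub_mul_sq_nonneg_of_supersolution {a b : ℝ} (hab : a ≤ b)
    {q u u' u'' h : ℝ → ℝ} (hq : ContinuousOn q (Icc a b))
    (hu : ∀ t ∈ Ioo a b, HasDerivAt u (u' t) t) (hu' : ∀ t ∈ Ioo a b, HasDerivAt u' (u'' t) t)
    (hpos : ∀ t ∈ Ioo a b, 0 < u t) (hsuper : ∀ t ∈ Ioo a b, u'' t + q t * u t ≤ 0)
    (hh : ContDiff ℝ 1 h) (hsupp : tsupport h ⊆ Ioo a b) :
    0 ≤ ∫ t in a..b, (deriv h t ^ 2 - q t * h t ^ 2) := by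
  let F : ℝ → ℝ := fun t => u' t / u t * h t ^ 2
  have hF : ∀ t ∈ Ioo a b, HasDerivAt F
      (deriv h t ^ 2 + u'' t / u t * h t ^ 2 - (deriv h t - u' t / u t * h t) ^ 2) t := fun t ht =>
    hasDerivAt_picone (hu t ht) (hu' t ht) (hh.differentiable one_ne_zero t).hasDerivAt
      (hpos t ht).ne'
  have hF_zero : ∀ t ∉ Ioo a b, F t = 0 := fun t ht => by
    simp [F, image_eq_zero_of_notMem_tsupport fun h => ht (hsupp h)]
  have hF_supp : tsupport F ⊆ tsupport h :=
    closure_mono fun t ht hht => ht (by simp [F, hht])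
  have hF_cont : Continuous F :=
    continuous_of_tsupport fun t ht => (hF t (hsupp (hF_supp ht))).continuousAt
  have hF_le : ∀ t ∈ Ioo a b,
      deriv h t ^ 2 + u'' t / u t * h t ^ 2 - (deriv h t - u' t / u t * h t) ^ 2 ≤
        deriv h t ^ 2 - q t * h t ^ 2 := fun t ht => by
    have hratio : u'' t / u t ≤ -q t := by
      rw [div_le_iff₀ (hpos t ht)]
      linarith [hsuper t ht]
    nlinarith [mul_le_mul_of_nonneg_right hratio (sq_nonneg (h t)),
      sq_nonneg (deriv h t - u' t / u t * h t)]
  have hint : IntegrableOn (fun t => deriv h t ^ 2 - q t * h t ^ 2) (Icc a b) :=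
    ((hh.continuous_deriv_one.pow 2).continuousOn.sub
      (hq.mul (hh.continuous.pow 2).continuousOn)).integrableOn_Icc
  have hFTC := intervalIntegral.sub_le_integral_of_hasDeriv_right_of_le hab hF_cont.continuousOn
    (fun t ht => (hF t ht).hasDerivWithinAt) hint hF_le
  simpa [hF_zero a (by simp), hF_zero b (by simp)] using hFTC

theorem integral_deriv_sq_sub_mul_sq_eq_neg_integral_mul {q g : ℝ → ℝ} (hq : Continuous q)
    (hg : ContDiff ℝ 2 g) (hgc : HasCompactSupport g) :
    ∫ t, (deriv g t ^ 2 - q t * g t ^ 2) = -∫ t, g t * (deriv (deriv g) t + q t * g t) := by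
  have hg' : ContDiff ℝ 1 (deriv g) := hg.deriv'
  have hgcont : Continuous g := hg.continuous
  have hg'cont : Continuous (deriv g) := hg'.continuous
  have hg''cont : Continuous (deriv (deriv g)) := hg'.continuous_deriv_one
  have hint_mul (φ : ℝ → ℝ) (hφ : Continuous φ) : Integrable fun t => g t * φ t :=
    (hgcont.mul hφ).integrable_of_hasCompactSupport hgc.mul_right
  have hint_pot : Integrable fun t => g t * (q t * g t) := hint_mul _ (hq.mul hgcont)
  have hint_deriv : Integrable (fun t => deriv g t * deriv g t) :=
    (hg'cont.mul hg'cont).integrable_of_hasCompactSupport hgc.deriv.mul_right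
  have hparts : ∫ t, g t * deriv (deriv g) t = -∫ t, deriv g t * deriv g t :=
    integral_mul_deriv_eq_deriv_mul_of_integrable
      (fun t _ => (hg.differentiable two_ne_zero t).hasDerivAt)
      (fun t _ => (hg'.differentiable one_ne_zero t).hasDerivAt)
      (hint_mul _ hg''cont) hint_deriv (hint_mul _ hg'cont)
  calc ∫ t, (deriv g t ^ 2 - q t * g t ^ 2)
      = ∫ t, (deriv g t * deriv g t - g t * (q t * g t)) := by congr 1; ext t; ring
    _ = -(∫ t, g t * deriv (deriv g) t) - ∫ t, g t * (q t * g t) := by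
      rw [integral_sub hint_deriv hint_pot, hparts, neg_neg]
    _ = -∫ t, g t * (deriv (deriv g) t + q t * g t) := by
      simp only [mul_add]
      rw [integral_add (hint_mul _ hg''cont) hint_pot]
      ring

theorem integral_deriv_sq_sub_mul_sq_neg_of_subsolution {q g : ℝ → ℝ} (hq : Continuous q)
    (hg : ContDiff ℝ 2 g) (hgc : HasCompactSupport g) (hnonneg : ∀ t, 0 ≤ g t)
    (hsub : ∀ t, 0 ≤ deriv (deriv g) t + q t * g t) {t₀ : ℝ} (ht₀ : 0 < g t₀)
    (hsub₀ : 0 < deriv (deriv g) t₀ + q t₀ * g t₀) :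
    ∫ t, (deriv g t ^ 2 - q t * g t ^ 2) < 0 := by
  have hcont : Continuous fun t => g t * (deriv (deriv g) t + q t * g t) :=
    hg.continuous.mul (hg.deriv'.continuous_deriv_one.add (hq.mul hg.continuous))
  rw [integral_deriv_sq_sub_mul_sq_eq_neg_integral_mul hq hg hgc, neg_lt_zero]
  exact hcont.integral_pos_of_hasCompactSupport_nonneg_nonzero hgc.mul_right
    (fun t => mul_nonneg (hnonneg t) (hsub t)) (mul_pos ht₀ hsub₀).ne'

end StabilityCriteria

section SmoothRamp

/-- The primitive of `Real.smoothTransition` vanishing at `0`: a smooth convex substitute for the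
positive part, equal to `0` on `(-∞, 0]` and of slope `1` on `[1, ∞)`. -/
noncomputable def smoothRamp (x : ℝ) : ℝ := ∫ s in (0 : ℝ)..x, smoothTransition s

lemma hasDerivAt_smoothRamp (x : ℝ) : HasDerivAt smoothRamp (smoothTransition x) x :=
  (smoothTransition.continuous.integral_hasStrictDerivAt 0 x).hasDerivAt

lemma deriv_smoothRamp : deriv smoothRamp = smoothTransition :=
  funext fun x => (hasDerivAt_smoothRamp x).deriv

lemma contDiff_smoothRamp {n : ℕ∞} : ContDiff ℝ n smoothRamp := by
  suffices h : ContDiff ℝ (⊤ : ℕ∞) smoothRamp from h.of_le (mod_cast le_top)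
  rw [contDiff_infty_iff_deriv, deriv_smoothRamp]
  exact ⟨fun x => (hasDerivAt_smoothRamp x).differentiableAt, smoothTransition.contDiff⟩

lemma smoothRamp_of_nonpos {x : ℝ} (hx : x ≤ 0) : smoothRamp x = 0 := by
  have hzero : EqOn smoothTransition (fun _ => 0) (uIcc 0 x) := fun s hs =>
    smoothTransition.zero_of_nonpos (by rw [uIcc_of_ge hx] at hs; exact hs.2)
  simp [smoothRamp, intervalIntegral.integral_congr hzero]

lemma smoothRamp_pos {x : ℝ} (hx : 0 < x) : 0 < smoothRamp x :=
  intervalIntegral.intervalIntegral_pos_of_pos_on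
    (smoothTransition.continuous.intervalIntegrable _ _)
    (fun _ hs => smoothTransition.pos_of_pos hs.1) hx

lemma smoothRamp_nonneg (x : ℝ) : 0 ≤ smoothRamp x :=
  (le_or_gt x 0).elim (fun hx => (smoothRamp_of_nonpos hx).ge) fun hx => (smoothRamp_pos hx).le

lemma smoothRamp_of_one_le {x : ℝ} (hx : 1 ≤ x) : smoothRamp x = smoothRamp 1 + (x - 1) := by
  have hone : EqOn smoothTransition (fun _ => 1) (uIcc 1 x) := fun s hs =>
    smoothTransition.one_of_one_le (by rw [uIcc_of_le hx] at hs; exact hs.1)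
  have hint := fun a b => smoothTransition.continuous.intervalIntegrable (μ := volume) a b
  rw [smoothRamp, ← intervalIntegral.integral_add_adjacent_intervals (hint 0 1) (hint 1 x),
    intervalIntegral.integral_congr hone]
  simp [smoothRamp]

lemma sub_one_mul_smoothTransition_lt_smoothRamp {x : ℝ} (hx : 0 < x) :
    (x - 1) * smoothTransition x < smoothRamp x := by
  rcases le_total x 1 with hx1 | hx1
  · calc (x - 1) * smoothTransition x
        ≤ 0 := mul_nonpos_of_nonpos_of_nonneg (sub_nonpos.2 hx1) (smoothTransition.nonneg x)
      _ < smoothRamp x := smoothRamp_pos hx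
  · rw [smoothRamp_of_one_le hx1, smoothTransition.one_of_one_le hx1, mul_one]
    linarith [smoothRamp_pos one_pos]

lemma sub_one_mul_smoothTransition_le_smoothRamp (x : ℝ) :
    (x - 1) * smoothTransition x ≤ smoothRamp x := by
  rcases le_or_gt x 0 with hx | hx
  · rw [smoothTransition.zero_of_nonpos hx, smoothRamp_of_nonpos hx, mul_zero]
  · exact (sub_one_mul_smoothTransition_lt_smoothRamp hx).le

lemma deriv_deriv_smoothRamp_comp {w : ℝ → ℝ} (hw : ContDiff ℝ 2 w) (t : ℝ) :
    deriv (deriv fun s => smoothRamp (w s)) t =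
      deriv smoothTransition (w t) * deriv w t ^ 2 +
        smoothTransition (w t) * deriv (deriv w) t := by
  have hw' : ∀ s, HasDerivAt w (deriv w s) s := fun s =>
    (hw.differentiable two_ne_zero s).hasDerivAt
  have hw'' : HasDerivAt (deriv w) (deriv (deriv w) t) t :=
    (hw.deriv'.differentiable one_ne_zero t).hasDerivAt
  have hT : HasDerivAt smoothTransition (deriv smoothTransition (w t)) (w t) :=
    (smoothTransition.contDiffAt.differentiableAt (n := 1) one_ne_zero).hasDerivAt
  have hramp : deriv (fun s => smoothRamp (w s)) = fun s => smoothTransition (w s) * deriv w s :=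
    funext fun s => ((hasDerivAt_smoothRamp (w s)).comp s (hw' s)).deriv
  rw [hramp]
  refine (((hT.comp t (hw' t)).mul hw'').congr_deriv ?_).deriv
  simp only [Function.comp_apply]
  ring

theorem integral_deriv_sq_sub_mul_sq_smoothRamp_comp_neg {q w : ℝ → ℝ} (hq : Continuous q)
    (hq_nonneg : ∀ t, 0 ≤ q t) (hw : ContDiff ℝ 2 w)
    (hsub : ∀ t, q t * (1 - w t) ≤ deriv (deriv w) t)
    (hwc : HasCompactSupport fun t => smoothRamp (w t)) {t₀ : ℝ} (hqt₀ : 0 < q t₀)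
    (hwt₀ : 0 < w t₀) :
    ∫ t, (deriv (fun s => smoothRamp (w s)) t ^ 2 - q t * smoothRamp (w t) ^ 2) < 0 := by
  have hlower : ∀ t, q t * (smoothRamp (w t) - (w t - 1) * smoothTransition (w t)) ≤
      deriv (deriv fun s => smoothRamp (w s)) t + q t * smoothRamp (w t) := fun t => by
    have hconvex := mul_nonneg (smoothTransition.monotone.deriv_nonneg (x := w t))
      (sq_nonneg (deriv w t))
    have hslope := mul_le_mul_of_nonneg_left (hsub t) (smoothTransition.nonneg (w t))
    rw [deriv_deriv_smoothRamp_comp hw]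
    linarith
  exact integral_deriv_sq_sub_mul_sq_neg_of_subsolution hq
    ((contDiff_smoothRamp (n := 2)).comp hw) hwc (fun t => smoothRamp_nonneg (w t))
    (fun t => (mul_nonneg (hq_nonneg t)
      (sub_nonneg.2 (sub_one_mul_smoothTransition_le_smoothRamp (w t)))).trans (hlower t))
    (smoothRamp_pos hwt₀)
    ((mul_pos hqt₀ (sub_pos.2 (sub_one_mul_smoothTransition_lt_smoothRamp hwt₀))).trans_le
      (hlower t₀))

end SmoothRamp

section Catenoid

lemma hasDerivAt_tanh (t : ℝ) : HasDerivAt tanh (cosh t ^ 2)⁻¹ t := by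
  rw [show tanh = sinh / cosh from funext tanh_eq_sinh_div_cosh]
  refine ((hasDerivAt_sinh t).div (hasDerivAt_cosh t) (cosh_pos t).ne').congr_deriv ?_
  rw [← sq, ← sq, cosh_sq_sub_sinh_sq, one_div]

lemma contDiff_tanh {n : WithTop ℕ∞} : ContDiff ℝ n tanh := by
  rw [show tanh = sinh / cosh from funext tanh_eq_sinh_div_cosh]
  exact contDiff_sinh.div contDiff_cosh fun t => (cosh_pos t).ne'

lemma strictMono_tanh : StrictMono tanh :=
  strictMono_of_hasDerivAt_pos hasDerivAt_tanh fun t => inv_pos.2 (pow_pos (cosh_pos t) 2)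

lemma hasDerivAt_inv_cosh_sq (t : ℝ) :
    HasDerivAt (fun s => (cosh s ^ 2)⁻¹) (-2 * tanh t * (cosh t ^ 2)⁻¹) t := by
  have hcosh : cosh t ≠ 0 := (cosh_pos t).ne'
  refine (((hasDerivAt_cosh t).pow 2).inv (pow_ne_zero 2 hcosh)).congr_deriv ?_
  rw [tanh_eq_sinh_div_cosh]
  simp only [Pi.pow_apply]
  field_simp
  norm_num
  ring

/-- The potential `2 / cosh²` of the Jacobi operator of the catenoid in the conformal parameter
`t`, that is, `|A|²` times the conformal factor `cosh²`. -/
noncomputable def catenoidPotential (t : ℝ) : ℝ := 2 * (cosh t ^ 2)⁻¹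

lemma catenoidPotential_pos (t : ℝ) : 0 < catenoidPotential t :=
  mul_pos two_pos (inv_pos.2 (pow_pos (cosh_pos t) 2))

lemma continuous_catenoidPotential : Continuous catenoidPotential :=
  continuous_const.mul ((continuous_cosh.pow 2).inv₀ fun t => (pow_pos (cosh_pos t) 2).ne')

/-- The rotation-invariant Jacobi field `⟨X, N⟩` of the catenoid generated by dilations, where
`N = (cos θ / cosh t, sin θ / cosh t, -tanh t)`. -/
noncomputable def dilationField (t : ℝ) : ℝ := 1 - t * tanh t

lemma contDiff_dilationField {n : WithTop ℕ∞} : ContDiff ℝ n dilationField :=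
  contDiff_const.sub (contDiff_id.mul contDiff_tanh)

lemma hasDerivAt_dilationField (t : ℝ) :
    HasDerivAt dilationField (-(tanh t + t * (cosh t ^ 2)⁻¹)) t :=
  (((hasDerivAt_id t).mul (hasDerivAt_tanh t)).const_sub 1).congr_deriv (by simp)

lemma hasDerivAt_deriv_dilationField (t : ℝ) :
    HasDerivAt (deriv dilationField) (-(catenoidPotential t * dilationField t)) t := by
  rw [show deriv dilationField = _ from funext fun s => (hasDerivAt_dilationField s).deriv]
  refine ((hasDerivAt_tanh t).add
    ((hasDerivAt_id t).mul (hasDerivAt_inv_cosh_sq t))).neg.congr_deriv ?_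
  simp only [id, catenoidPotential, dilationField]
  ring

lemma dilationField_abs (t : ℝ) : dilationField |t| = dilationField t := by
  rcases abs_choice t with h | h <;> simp [h, dilationField, tanh_neg]

lemma strictAntiOn_dilationField : StrictAntiOn dilationField (Ici 0) := by
  intro s hs t _ hst
  have htanh_nonneg : 0 ≤ tanh s := tanh_zero ▸ strictMono_tanh.monotone hs
  exact sub_lt_sub_left
    (mul_lt_mul'' hst (strictMono_tanh hst) hs htanh_nonneg) 1

lemma dilationField_lt_dilationField_iff {s t : ℝ} :
    dilationField t < dilationField s ↔ |s| < |t| := by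
  rw [← dilationField_abs s, ← dilationField_abs t]
  exact strictAntiOn_dilationField.lt_iff_gt (abs_nonneg t) (abs_nonneg s)

lemma dilationField_pos_of_mem_Ioo {r t : ℝ} (hr : dilationField r = 0) (ht : t ∈ Ioo (-r) r) :
    0 < dilationField t :=
  hr ▸ dilationField_lt_dilationField_iff.2 ((abs_lt.2 ht).trans_le (le_abs_self r))

theorem integral_catenoid_slice_nonneg {r : ℝ} (hr : 0 ≤ r) (hr_zero : dilationField r = 0)
    {f : ℝ × ℝ → ℝ} (hf : ContDiff ℝ 1 f) {θ : ℝ}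
    (hsupp : tsupport (fun t => f (t, θ)) ⊆ Ioo (-r) r) :
    0 ≤ ∫ t in (-r)..r, (deriv (fun t' => f (t', θ)) t ^ 2 + deriv (fun θ' => f (t, θ')) θ ^ 2
      - catenoidPotential t * f (t, θ) ^ 2) := by
  have hslice : ContDiff ℝ 1 fun t => f (t, θ) := hf.comp (contDiff_prodMk_left θ)
  have ht_cont : Continuous fun t => deriv (fun t' => f (t', θ)) t := hslice.continuous_deriv_one
  have hθ_cont : Continuous fun t => deriv (fun θ' => f (t, θ')) θ :=
    (Continuous.fderiv_one (f := fun t θ' => f (t, θ')) hf continuous_const).clm_apply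
      continuous_const
  have hpot_cont := continuous_catenoidPotential.mul (hslice.continuous.pow 2)
  calc 0 ≤ ∫ t in (-r)..r, (deriv (fun t' => f (t', θ)) t ^ 2
        - catenoidPotential t * f (t, θ) ^ 2) :=
      integral_deriv_sq_sub_mul_sq_nonneg_of_supersolution (neg_le_self hr)
        continuous_catenoidPotential.continuousOn
        (fun t _ => (hasDerivAt_dilationField t).differentiableAt.hasDerivAt)
        (fun t _ => hasDerivAt_deriv_dilationField t)
        (fun t ht => dilationField_pos_of_mem_Ioo hr_zero ht)
        (fun t _ => (neg_add_cancel _).le) hslice hsupp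
    _ ≤ _ := intervalIntegral.integral_mono (neg_le_self hr)
        (((ht_cont.pow 2).sub hpot_cont).intervalIntegrable _ _)
        ((((ht_cont.pow 2).add (hθ_cont.pow 2)).sub hpot_cont).intervalIntegrable _ _)
        fun t => sub_le_sub_right (le_add_of_nonneg_right (sq_nonneg _)) _

theorem exists_integral_catenoid_neg {r : ℝ} (hr : 0 ≤ r) (hr_neg : dilationField r < 0) :
    ∃ g : ℝ → ℝ, ContDiff ℝ (⊤ : ℕ∞) g ∧ tsupport g ⊆ Icc (-r) r ∧
      ∫ t, (deriv g t ^ 2 - catenoidPotential t * g t ^ 2) < 0 := by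
  let w : ℝ → ℝ := fun t => 1 - dilationField t / dilationField r
  have hw (n : WithTop ℕ∞) : ContDiff ℝ n w :=
    contDiff_const.sub (contDiff_dilationField.div_const _)
  have hw' : deriv w = fun t => -(deriv dilationField t / dilationField r) := funext fun t =>
    (((hasDerivAt_dilationField t).differentiableAt.hasDerivAt.div_const _).const_sub 1).deriv
  have hw'' : ∀ t, deriv (deriv w) t = catenoidPotential t * (1 - w t) := fun t => by
    rw [hw', (((hasDerivAt_deriv_dilationField t).div_const _).fun_neg).deriv]
    ring
  have hw_nonpos : ∀ t ∉ Icc (-r) r, w t ≤ 0 := fun t ht => by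
    have hrt : |r| < |t| := by
      rwa [mem_Icc, ← abs_le, not_le, ← abs_of_nonneg hr] at ht
    exact sub_nonpos.2 ((one_le_div_of_neg hr_neg).2
      (dilationField_lt_dilationField_iff.2 hrt).le)
  have hw_zero : 0 < w 0 := by
    have hone : dilationField 0 = 1 := by simp [dilationField]
    simp only [w, hone, sub_pos]
    exact (one_div_neg.2 hr_neg).trans one_pos
  have hsupp : tsupport (fun t => smoothRamp (w t)) ⊆ Icc (-r) r :=
    closure_minimal (fun t ht => by_contra fun hmem => ht (smoothRamp_of_nonpos (hw_nonpos t hmem)))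
      isClosed_Icc
  exact ⟨fun t => smoothRamp (w t), contDiff_smoothRamp.comp (hw _), hsupp,
    integral_deriv_sq_sub_mul_sq_smoothRamp_comp_neg continuous_catenoidPotential
      (fun t => (catenoidPotential_pos t).le) (hw 2) (fun t => (hw'' t).ge)
      (isCompact_Icc.of_isClosed_subset (isClosed_tsupport _) hsupp)
      (catenoidPotential_pos 0) hw_zero⟩

end Catenoid

theorem stmt1_general (ξ₀ : ℝ) (hξpos : 0 < ξ₀) (hξzero : 1 - ξ₀ * Real.tanh ξ₀ = 0) :
    (∀ f : ℝ × ℝ → ℝ, ContDiff ℝ 1 f →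
      (∃ K : Set ℝ, IsCompact K ∧ K ⊆ Set.Ioo (-ξ₀) ξ₀ ∧
        Function.support f ⊆ K ×ˢ (Set.univ : Set ℝ)) →
      ∀ a b : ℝ, a ≤ b → 0 ≤ ∫ θ in a..b, ∫ t in (-ξ₀)..ξ₀,
        ((deriv (fun t' => f (t', θ)) t) ^ 2 + (deriv (fun θ' => f (t, θ')) θ) ^ 2
          - 2 * (Real.cosh t ^ 2)⁻¹ * (f (t, θ)) ^ 2)) ∧
    (∀ ε : ℝ, 0 < ε → ∃ g : ℝ → ℝ, ContDiff ℝ (⊤ : ℕ∞) g ∧ HasCompactSupport g ∧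
      tsupport g ⊆ Set.Ioo (-ξ₀ - ε) (ξ₀ + ε) ∧
      (∫ t : ℝ, ((deriv g t) ^ 2 - 2 * (Real.cosh t ^ 2)⁻¹ * (g t) ^ 2)) < 0) := by
  constructor
  · rintro f hf ⟨K, hK, hKsub, hsupp⟩ a b hab
    have hslice_supp : ∀ θ, tsupport (fun t => f (t, θ)) ⊆ Ioo (-ξ₀) ξ₀ := fun θ =>
      (closure_minimal (fun t ht => (hsupp (a := (t, θ)) ht).1) hK.isClosed).trans hKsub
    exact intervalIntegral.integral_nonneg hab fun θ _ =>
      integral_catenoid_slice_nonneg hξpos.le hξzero hf (hslice_supp θ)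
  · intro ε hε
    have hpos : 0 < ξ₀ + ε / 2 := by positivity
    have hneg : dilationField (ξ₀ + ε / 2) < 0 :=
      (strictAntiOn_dilationField hξpos.le hpos.le (by linarith)).trans_eq hξzero
    obtain ⟨g, hg, hg_supp, hg_neg⟩ := exists_integral_catenoid_neg hpos.le hneg
    exact ⟨g, hg, isCompact_Icc.of_isClosed_subset (isClosed_tsupport g) hg_supp,
      hg_supp.trans (Icc_subset_Ioo (by linarith) (by linarith)), hg_neg⟩

/-- Lindelöf's theorem for the Euclidean catenoid: the band `|t| < ξ₀` is weakly stable,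
and any strictly larger rotation-invariant band is unstable. -/
theorem stmt1 (ξ₀ : ℝ) (hξpos : 0 < ξ₀) (hξzero : 1 - ξ₀ * Real.tanh ξ₀ = 0)
    (hξuniq : ∀ t : ℝ, 0 < t → 1 - t * Real.tanh t = 0 → t = ξ₀) :
    (∀ f : ℝ × ℝ → ℝ, ContDiff ℝ (⊤ : ℕ∞) f →
      (∀ t θ : ℝ, f (t, θ + 2 * π) = f (t, θ)) →
      (∃ K : Set ℝ, IsCompact K ∧ K ⊆ Set.Ioo (-ξ₀) ξ₀ ∧
        Function.support f ⊆ K ×ˢ (Set.univ : Set ℝ)) →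
      0 ≤ ∫ θ in (0:ℝ)..(2 * π), ∫ t in (-ξ₀)..ξ₀,
        ((deriv (fun t' => f (t', θ)) t) ^ 2 + (deriv (fun θ' => f (t, θ')) θ) ^ 2
          - 2 * (Real.cosh t ^ 2)⁻¹ * (f (t, θ)) ^ 2)) ∧
    (∀ ε : ℝ, 0 < ε → ∃ g : ℝ → ℝ, ContDiff ℝ (⊤ : ℕ∞) g ∧ HasCompactSupport g ∧
      tsupport g ⊆ Set.Ioo (-ξ₀ - ε) (ξ₀ + ε) ∧
      (∫ t : ℝ, ((deriv g t) ^ 2 - 2 * (Real.cosh t ^ 2)⁻¹ * (g t) ^ 2)) < 0) := by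
  obtain ⟨hstable, hunstable⟩ := stmt1_general ξ₀ hξpos hξzero
  exact ⟨fun f hf _ hK => hstable f (hf.of_le (by simp)) hK _ _ two_pi_pos.le, hunstable⟩
end

section
/- Let n ≥ 2, let T_n = ∫₁^∞ (u^{2n−2} − 1)^{−1/2} du, and let c = c_n : (−T_n, T_n) → ℝ be the maximal solution of c·c'' = (n−1)(1 + c'²), c(0) = 1, c'(0) = 0. Define v(t) = c'(t)·(1 + c'(t)²)^{−1/2} and e(t) = −c(t)^{2−n} + t·v(t). Then: (i) v is odd with v(t) = sgn(t)·(1 − c(t)^{2−2n})^{1/2}, v(0) = 0, and v(t) → 1 as t → T_n; (ii) e is even, e(0) = −1, and if n ≥ 3 then e(t) → T_n as t → T_n; (iii) e has exactly one zero z in the open interval (0, T_n). -/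
open Real MeasureTheory Set Filter Topology ENNReal

/-!
Write `T` for the half-height and `I = (-T, T)`. The first integral `1 + c'² = c ^ (2n - 2)` of the
profile equation gives the formula for `v`, and it turns the substitution `u = c t` into
`∫_{c(0, T)} (u ^ (2n - 2) - 1) ^ (-1/2) du = T`. A bounded `c` would only collect a proper part
of this integral, so `c → ∞` at `T`, which gives both limits. On `[0, T)` the field `e` is
strictly increasing, because `c` and `v` are; it starts at `-1` and ends at `T > 0`
(at `+∞` when `n = 2`, where `T = ∞`), so it has exactly one zero.
-/

section CatenoidHeight

/-- The density `u ↦ (u ^ (2n - 2) - 1) ^ (-1/2)` of the height of the `n`-catenoid with respect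
to its radius `u`, as a function with values in `[0, ∞]` so that its integral over `(1, ∞)` may
diverge. -/
noncomputable def catenoidHeightDensity (n : ℕ) (u : ℝ) : ℝ≥0∞ :=
  ENNReal.ofReal ((u ^ (2 * n - 2) - 1) ^ (-(1 : ℝ) / 2))

/-- The half-height `T_n` of the `n`-catenoid of unit neck radius. -/
noncomputable def catenoidHeight (n : ℕ) : ℝ≥0∞ :=
  ∫⁻ u in Ioi (1 : ℝ), catenoidHeightDensity n u

theorem measurable_catenoidHeightDensity (n : ℕ) : Measurable (catenoidHeightDensity n) := by
  unfold catenoidHeightDensity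
  fun_prop

theorem catenoidHeightDensity_eq_inv_sqrt (n : ℕ) {u : ℝ} (hu : 1 ≤ u) :
    catenoidHeightDensity n u = ENNReal.ofReal (√(u ^ (2 * n - 2) - 1))⁻¹ := by
  have hpow : 0 ≤ u ^ (2 * n - 2) - 1 := sub_nonneg.2 (one_le_pow₀ hu)
  rw [catenoidHeightDensity, neg_div, Real.rpow_neg hpow, ← Real.sqrt_eq_rpow]

theorem catenoidHeightDensity_pos {n : ℕ} (hn : 2 ≤ n) {u : ℝ} (hu : 1 < u) :
    0 < catenoidHeightDensity n u := by
  have hpow : 1 < u ^ (2 * n - 2) := one_lt_pow₀ hu (by lia)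
  exact ENNReal.ofReal_pos.2 (Real.rpow_pos_of_pos (sub_pos.2 hpow) _)

theorem setLIntegral_Ioi_catenoidHeightDensity_pos {n : ℕ} (hn : 2 ≤ n) {M : ℝ} (hM : 1 ≤ M) :
    0 < ∫⁻ u in Ioi M, catenoidHeightDensity n u := by
  rw [setLIntegral_pos_iff (measurable_catenoidHeightDensity n)]
  have hsupport : Ioi M ⊆ Function.support (catenoidHeightDensity n) ∩ Ioi M := fun u hu =>
    ⟨(catenoidHeightDensity_pos hn (hM.trans_lt hu)).ne', hu⟩
  exact (by simp : 0 < volume (Ioi M)).trans_le (measure_mono hsupport)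

theorem catenoidHeight_pos {n : ℕ} (hn : 2 ≤ n) : 0 < catenoidHeight n :=
  setLIntegral_Ioi_catenoidHeightDensity_pos hn le_rfl

theorem catenoidHeight_two : catenoidHeight 2 = ⊤ := by
  by_contra hfin
  have hle : ∫⁻ u in Ioi (1 : ℝ), ENNReal.ofReal u⁻¹ ≤ catenoidHeight 2 := by
    refine setLIntegral_mono (measurable_catenoidHeightDensity 2) fun u (hu : 1 < u) => ?_
    rw [catenoidHeightDensity_eq_inv_sqrt 2 hu.le]
    have hpos : 0 < √(u ^ (2 * 2 - 2) - 1) :=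
      Real.sqrt_pos.2 (sub_pos.2 (one_lt_pow₀ hu (by norm_num)))
    have hsqrt : √(u ^ (2 * 2 - 2) - 1) ≤ u :=
      Real.sqrt_le_iff.2 ⟨by linarith, by norm_num⟩
    gcongr
  refine not_integrableOn_Ioi_inv (a := (1 : ℝ)) ?_
  refine (lintegral_ofReal_ne_top_iff_integrable (by fun_prop) ?_).1 (ne_top_of_le_ne_top hfin hle)
  filter_upwards [ae_restrict_mem measurableSet_Ioi] with u (hu : 1 < u)
  exact inv_nonneg.2 (by linarith)

theorem integrableOn_Ioi_inv_mul_sqrt_sub_one :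
    IntegrableOn (fun u : ℝ => (u * √(u - 1))⁻¹) (Ioi 1) := by
  have hlim : Tendsto (fun u : ℝ => 2 * arctan √(u - 1)) atTop (𝓝 (2 * (π / 2))) := by
    refine Tendsto.const_mul 2 ((tendsto_arctan_atTop.mono_right nhdsWithin_le_nhds).comp ?_)
    exact Real.tendsto_sqrt_atTop.comp (tendsto_atTop_add_const_right _ (-1) tendsto_id)
  refine integrableOn_Ioi_deriv_of_nonneg (by fun_prop) (fun u (hu : 1 < u) => ?_)
    (fun u (hu : 1 < u) => by positivity) hlim
  have hsub : 0 < u - 1 := sub_pos.2 hu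
  refine ((((hasDerivAt_id u).sub_const 1).sqrt hsub.ne').arctan.const_mul 2).congr_deriv ?_
  rw [id, Real.sq_sqrt hsub.le, add_sub_cancel]
  field_simp

theorem catenoidHeight_lt_top {n : ℕ} (hn : 3 ≤ n) : catenoidHeight n < ⊤ := by
  refine (setLIntegral_mono (by fun_prop) fun u (hu : 1 < u) => ?_).trans_lt
    integrableOn_Ioi_inv_mul_sqrt_sub_one.lintegral_lt_top
  rw [catenoidHeightDensity_eq_inv_sqrt n hu.le]
  have hsub : 0 < u - 1 := sub_pos.2 hu
  have hsqrt : u * √(u - 1) ≤ √(u ^ (2 * n - 2) - 1) := by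
    have hpow : u ^ 4 ≤ u ^ (2 * n - 2) := pow_le_pow_right₀ hu.le (by lia)
    refine Real.le_sqrt_of_sq_le ?_
    rw [mul_pow, Real.sq_sqrt hsub.le]
    nlinarith [mul_pos (pow_pos (zero_lt_one.trans hu) 3) hsub]
  gcongr

theorem setLIntegral_Ioc_catenoidHeightDensity_lt_top {n : ℕ} (hn : 2 ≤ n) (M : ℝ) :
    ∫⁻ u in Ioc 1 M, catenoidHeightDensity n u < ⊤ := by
  have hint : IntegrableOn (fun u : ℝ => M * (u * √(u - 1))⁻¹) (Ioc 1 M) :=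
    (integrableOn_Ioi_inv_mul_sqrt_sub_one.mono_set Ioc_subset_Ioi_self).const_mul M
  refine (setLIntegral_mono (by fun_prop) fun u hu => ?_).trans_lt hint.lintegral_lt_top
  obtain ⟨hu, huM⟩ : 1 < u ∧ u ≤ M := hu
  rw [catenoidHeightDensity_eq_inv_sqrt n hu.le]
  have hsqrt : 0 < √(u - 1) := Real.sqrt_pos.2 (sub_pos.2 hu)
  have hpow : u ≤ u ^ (2 * n - 2) := le_self_pow₀ hu.le (by lia)
  gcongr ENNReal.ofReal ?_
  calc (√(u ^ (2 * n - 2) - 1))⁻¹ ≤ (√(u - 1))⁻¹ := by gcongr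
    _ = u * (u * √(u - 1))⁻¹ := by field_simp
    _ ≤ M * (u * √(u - 1))⁻¹ := by gcongr

theorem setLIntegral_Ioc_lt_catenoidHeight {n : ℕ} (hn : 2 ≤ n) {M : ℝ} (hM : 1 ≤ M) :
    ∫⁻ u in Ioc 1 M, catenoidHeightDensity n u < catenoidHeight n := by
  have hsplit : catenoidHeight n = (∫⁻ u in Ioc 1 M, catenoidHeightDensity n u)
      + ∫⁻ u in Ioi M, catenoidHeightDensity n u := by
    rw [← lintegral_union measurableSet_Ioi (Ioc_disjoint_Ioi le_rfl), Ioc_union_Ioi_eq_Ioi hM,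
      catenoidHeight]
  rw [hsplit]
  exact ENNReal.lt_add_right (setLIntegral_Ioc_catenoidHeightDensity_lt_top hn M).ne
    (setLIntegral_Ioi_catenoidHeightDensity_pos hn hM).ne'

end CatenoidHeight

section RightEnd

/-- The filter of `t → sup I` with `t ∈ I`, for an open interval `I`, which treats bounded and
unbounded intervals uniformly. -/
def rightEnd {α : Type*} [Preorder α] (I : Set α) : Filter α :=
  map ((↑) : I → α) atTop

theorem eventually_mem_rightEnd {α : Type*} [Preorder α] {I : Set α} {s : α} (hs : s ∈ I) :
    ∀ᶠ t in rightEnd I, t ∈ I ∩ Ici s := by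
  filter_upwards [image_mem_map (Ici_mem_atTop (⟨s, hs⟩ : I))]
  rintro _ ⟨t, ht, rfl⟩
  exact ⟨t.2, ht⟩

theorem eball_zero_eq_Ioo {r : ℝ≥0∞} (hr : r ≠ ⊤) :
    Metric.eball (0 : ℝ) r = Ioo (-r.toReal) r.toReal := by
  lift r to NNReal using hr
  rw [Metric.eball_coe, Real.ball_eq_Ioo, zero_sub, zero_add, ENNReal.coe_toReal]

theorem volume_eball_zero_inter_Ioi (r : ℝ≥0∞) :
    volume (Metric.eball (0 : ℝ) r ∩ Ioi 0) = r := by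
  rcases eq_or_ne r ⊤ with rfl | hr
  · simp
  · rw [eball_zero_eq_Ioo hr, Ioo_inter_Ioi, sup_eq_right.2 (by simp), Real.volume_Ioo, sub_zero,
      ENNReal.ofReal_toReal hr]

theorem rightEnd_eball_top : rightEnd (Metric.eball (0 : ℝ) ⊤) = atTop :=
  map_val_atTop_of_Ici_subset (a := 0) (by simp)

theorem rightEnd_eball {r : ℝ≥0∞} (hr₀ : 0 < r) (hr : r ≠ ⊤) :
    rightEnd (Metric.eball (0 : ℝ) r) = 𝓝[<] r.toReal := by
  have hpos : 0 < r.toReal := ENNReal.toReal_pos hr₀.ne' hr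
  rw [rightEnd, eball_zero_eq_Ioo hr, map_coe_Ioo_atTop (by linarith)]

end RightEnd

/-- The function `v = c' (1 + c'²) ^ (-1/2)`: the inner product of the vertical Killing field with
the unit normal along the hypersurface of revolution with profile `c`. -/
noncomputable def verticalField (c : ℝ → ℝ) (t : ℝ) : ℝ :=
  deriv c t / √(1 + deriv c t ^ 2)

theorem verticalField_eq_sin_arctan (c : ℝ → ℝ) :
    verticalField c = fun t => sin (arctan (deriv c t)) :=
  funext fun t => (Real.sin_arctan (deriv c t)).symm

/-- The function `e = -c ^ (2 - n) + t v`: the Jacobi field of the variation `a ↦ a c(t / a)` of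
the `n`-catenoid with profile `c`. -/
noncomputable def variationField (n : ℕ) (c : ℝ → ℝ) (t : ℝ) : ℝ :=
  -(c t ^ ((2 : ℤ) - n)) + t * verticalField c t

/-- `c` solves, on the open interval `I` around `0`, the initial value problem for the profile
curves of `n`-dimensional catenoids of unit neck radius. -/
structure IsCatenoidProfile (n : ℕ) (I : Set ℝ) (c : ℝ → ℝ) : Prop where
  two_le : 2 ≤ n
  isOpen : IsOpen I
  convex : Convex ℝ I
  zero_mem : 0 ∈ I
  contDiffOn : ContDiffOn ℝ 2 c I
  apply_zero : c 0 = 1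
  deriv_zero : deriv c 0 = 0
  ode : ∀ t ∈ I, c t * deriv (deriv c) t = (n - 1 : ℝ) * (1 + deriv c t ^ 2)

theorem div_sqrt_one_add_sq (x : ℝ) :
    x / √(1 + x ^ 2) = Real.sign x * √(1 - (1 + x ^ 2)⁻¹) := by
  have hsq : 1 - (1 + x ^ 2)⁻¹ = x ^ 2 / (1 + x ^ 2) := by field_simp; ring
  rw [hsq, Real.sqrt_div (sq_nonneg x), Real.sqrt_sq_eq_abs, ← mul_div_assoc]
  rcases lt_trichotomy x 0 with hx | rfl | hx
  · rw [Real.sign_of_neg hx, abs_of_neg hx, neg_one_mul, neg_neg]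
  · simp
  · rw [Real.sign_of_pos hx, abs_of_pos hx, one_mul]

theorem zpow_le_zpow_left_of_nonpos {𝕜 : Type*} [Field 𝕜] [LinearOrder 𝕜] [IsStrictOrderedRing 𝕜]
    {k : ℤ} (hk : k ≤ 0) {a b : 𝕜} (ha : 0 < a) (hab : a ≤ b) : b ^ k ≤ a ^ k := by
  have hpow : a ^ (-k) ≤ b ^ (-k) := zpow_le_zpow_left₀ (neg_nonneg.2 hk) ha.le hab
  simpa only [zpow_neg, inv_inv] using inv_anti₀ (zpow_pos ha _) hpow

namespace IsCatenoidProfile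

variable {n : ℕ} {I : Set ℝ} {c : ℝ → ℝ}

section FirstIntegral

theorem hasDerivAt (h : IsCatenoidProfile n I c) {t : ℝ} (ht : t ∈ I) :
    HasDerivAt c (deriv c t) t :=
  ((h.contDiffOn.differentiableOn (by simp)).differentiableAt (h.isOpen.mem_nhds ht)).hasDerivAt

theorem hasDerivAt_deriv (h : IsCatenoidProfile n I c) {t : ℝ} (ht : t ∈ I) :
    HasDerivAt (deriv c) (deriv (deriv c) t) t := by
  have hderiv : ContDiffOn ℝ 1 (deriv c) I := h.contDiffOn.deriv_of_isOpen h.isOpen (by norm_num)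
  exact ((hderiv.differentiableOn (by simp)).differentiableAt (h.isOpen.mem_nhds ht)).hasDerivAt

theorem continuousOn_deriv (h : IsCatenoidProfile n I c) : ContinuousOn (deriv c) I :=
  fun _ ht => (h.hasDerivAt_deriv ht).continuousAt.continuousWithinAt

theorem mul_deriv_deriv_pos (h : IsCatenoidProfile n I c) {t : ℝ} (ht : t ∈ I) :
    0 < c t * deriv (deriv c) t := by
  have hn : (1 : ℝ) < n := by exact_mod_cast h.two_le
  rw [h.ode t ht]
  exact mul_pos (sub_pos.2 hn) (by positivity)

theorem pos (h : IsCatenoidProfile n I c) {t : ℝ} (ht : t ∈ I) : 0 < c t := by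
  by_contra! hle
  obtain ⟨s, hs, hs0⟩ := h.convex.isPreconnected.intermediate_value ht h.zero_mem
    h.contDiffOn.continuousOn ⟨hle, h.apply_zero ▸ zero_le_one⟩
  exact (left_ne_zero_of_mul (h.mul_deriv_deriv_pos hs).ne') hs0

theorem one_add_deriv_sq_mul_zpow (h : IsCatenoidProfile n I c) {t : ℝ} (ht : t ∈ I) :
    (1 + deriv c t ^ 2) * c t ^ ((2 : ℤ) - 2 * n) = 1 := by
  have hzero : ∀ s ∈ I, HasDerivAt
      (fun s => (1 + deriv c s ^ 2) * c s ^ ((2 : ℤ) - 2 * n)) 0 s := by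
    intro s hs
    have hne : c s ≠ 0 := (h.pos hs).ne'
    have hzpow := (hasDerivAt_zpow ((2 : ℤ) - 2 * n) (c s) (.inl hne)).comp s (h.hasDerivAt hs)
    refine ((((h.hasDerivAt_deriv hs).pow 2).const_add 1).mul hzpow).congr_deriv ?_
    have hpred : c s ^ ((2 : ℤ) - 2 * n) = c s ^ ((2 : ℤ) - 2 * n - 1) * c s := by
      rw [← zpow_add_one₀ hne, sub_add_cancel]
    simp only [Function.comp_apply, Pi.pow_apply, hpred]
    generalize c s ^ ((2 : ℤ) - 2 * n - 1) = q
    push_cast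
    linear_combination (2 * deriv c s * q) * h.ode s hs
  have hconst := h.isOpen.is_const_of_deriv_eq_zero h.convex.isPreconnected
    (fun s hs => (hzero s hs).differentiableAt.differentiableWithinAt)
    (fun s hs => (hzero s hs).deriv) ht h.zero_mem
  simpa [h.apply_zero, h.deriv_zero] using hconst

theorem inv_one_add_deriv_sq (h : IsCatenoidProfile n I c) {t : ℝ} (ht : t ∈ I) :
    (1 + deriv c t ^ 2)⁻¹ = c t ^ ((2 : ℤ) - 2 * n) :=
  inv_eq_of_mul_eq_one_right (h.one_add_deriv_sq_mul_zpow ht)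

theorem one_add_deriv_sq (h : IsCatenoidProfile n I c) {t : ℝ} (ht : t ∈ I) :
    1 + deriv c t ^ 2 = c t ^ (2 * n - 2) := by
  have hexp : (2 : ℤ) - 2 * n = -((2 * n - 2 : ℕ) : ℤ) := by have := h.two_le; lia
  rw [← inv_inj, h.inv_one_add_deriv_sq ht, hexp, zpow_neg, zpow_natCast]

end FirstIntegral

section Monotonicity

theorem strictMonoOn_deriv (h : IsCatenoidProfile n I c) : StrictMonoOn (deriv c) I :=
  strictMonoOn_of_deriv_pos h.convex h.continuousOn_deriv fun _ ht =>
    pos_of_mul_pos_right (h.mul_deriv_deriv_pos (interior_subset ht))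
      (h.pos (interior_subset ht)).le

theorem deriv_pos (h : IsCatenoidProfile n I c) {t : ℝ} (ht : t ∈ I) (ht₀ : 0 < t) :
    0 < deriv c t :=
  h.deriv_zero ▸ h.strictMonoOn_deriv h.zero_mem ht ht₀

theorem sign_deriv (h : IsCatenoidProfile n I c) {t : ℝ} (ht : t ∈ I) :
    Real.sign (deriv c t) = Real.sign t := by
  rcases lt_trichotomy t 0 with ht₀ | rfl | ht₀
  · rw [Real.sign_of_neg ht₀,
      Real.sign_of_neg (h.deriv_zero ▸ h.strictMonoOn_deriv ht h.zero_mem ht₀)]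
  · rw [h.deriv_zero]
  · rw [Real.sign_of_pos ht₀, Real.sign_of_pos (h.deriv_pos ht ht₀)]

theorem strictMonoOn (h : IsCatenoidProfile n I c) : StrictMonoOn c (I ∩ Ici 0) := by
  refine strictMonoOn_of_deriv_pos (h.convex.inter (convex_Ici 0))
    (h.contDiffOn.continuousOn.mono inter_subset_left) fun t ht => ?_
  rw [interior_inter, interior_Ici] at ht
  exact h.deriv_pos (interior_subset ht.1) ht.2

theorem zero_mem_inter_Ici (h : IsCatenoidProfile n I c) : 0 ∈ I ∩ Ici 0 :=
  ⟨h.zero_mem, self_mem_Ici⟩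

theorem one_lt (h : IsCatenoidProfile n I c) {t : ℝ} (ht : t ∈ I) (ht₀ : 0 < t) : 1 < c t :=
  h.apply_zero ▸ h.strictMonoOn h.zero_mem_inter_Ici ⟨ht, ht₀.le⟩ ht₀

end Monotonicity

section Unboundedness

theorem deriv_mul_catenoidHeightDensity (h : IsCatenoidProfile n I c) {t : ℝ} (ht : t ∈ I)
    (ht₀ : 0 < t) : ENNReal.ofReal |deriv c t| * catenoidHeightDensity n (c t) = 1 := by
  have hderiv := h.deriv_pos ht ht₀
  rw [catenoidHeightDensity_eq_inv_sqrt n (h.one_lt ht ht₀).le, ← h.one_add_deriv_sq ht,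
    add_sub_cancel_left, Real.sqrt_sq hderiv.le, abs_of_pos hderiv,
    ← ENNReal.ofReal_mul hderiv.le, mul_inv_cancel₀ hderiv.ne', ENNReal.ofReal_one]

theorem setLIntegral_image_catenoidHeightDensity (h : IsCatenoidProfile n I c) :
    ∫⁻ u in c '' (I ∩ Ioi 0), catenoidHeightDensity n u = volume (I ∩ Ioi 0) := by
  have hmeas : MeasurableSet (I ∩ Ioi (0 : ℝ)) := (h.isOpen.inter isOpen_Ioi).measurableSet
  rw [lintegral_image_eq_lintegral_abs_deriv_mul hmeas
      (fun t ht => (h.hasDerivAt ht.1).hasDerivWithinAt)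
      (h.strictMonoOn.injOn.mono (inter_subset_inter_right I Ioi_subset_Ici_self)),
    setLIntegral_congr_fun hmeas fun t ht => h.deriv_mul_catenoidHeightDensity ht.1 ht.2,
    setLIntegral_one]

theorem exists_lt_apply (h : IsCatenoidProfile n (Metric.eball 0 (catenoidHeight n)) c) (M : ℝ) :
    ∃ t ∈ Metric.eball 0 (catenoidHeight n) ∩ Ioi 0, M < c t := by
  set I := Metric.eball (0 : ℝ) (catenoidHeight n)
  by_contra! hM
  have himage : c '' (I ∩ Ioi 0) ⊆ Ioc 1 (max 1 M) := by
    rintro _ ⟨t, ht, rfl⟩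
    exact ⟨h.one_lt ht.1 ht.2, (hM t ht).trans (le_max_right 1 M)⟩
  refine lt_irrefl (catenoidHeight n) ?_
  calc catenoidHeight n
      = volume (I ∩ Ioi 0) := (volume_eball_zero_inter_Ioi _).symm
    _ = ∫⁻ u in c '' (I ∩ Ioi 0), catenoidHeightDensity n u :=
        h.setLIntegral_image_catenoidHeightDensity.symm
    _ ≤ ∫⁻ u in Ioc 1 (max 1 M), catenoidHeightDensity n u := lintegral_mono_set himage
    _ < catenoidHeight n := setLIntegral_Ioc_lt_catenoidHeight h.two_le (le_max_left 1 M)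

theorem tendsto_rightEnd_atTop (h : IsCatenoidProfile n (Metric.eball 0 (catenoidHeight n)) c) :
    Tendsto c (rightEnd (Metric.eball 0 (catenoidHeight n))) atTop := by
  refine tendsto_atTop.2 fun M => ?_
  obtain ⟨s, ⟨hs, hs₀⟩, hM⟩ := h.exists_lt_apply M
  filter_upwards [eventually_mem_rightEnd hs] with t ⟨ht, hst⟩
  have hle : c s ≤ c t :=
    h.strictMonoOn.monotoneOn ⟨hs, hs₀.out.le⟩ ⟨ht, hs₀.out.le.trans hst⟩ hst
  exact hM.le.trans hle

end Unboundedness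

section VerticalField

theorem verticalField_zero (h : IsCatenoidProfile n I c) : verticalField c 0 = 0 := by
  rw [verticalField, h.deriv_zero, zero_div]

theorem verticalField_eq (h : IsCatenoidProfile n I c) {t : ℝ} (ht : t ∈ I) :
    verticalField c t = Real.sign t * √(1 - c t ^ ((2 : ℤ) - 2 * n)) := by
  rw [verticalField, div_sqrt_one_add_sq, h.inv_one_add_deriv_sq ht, h.sign_deriv ht]

theorem verticalField_neg (h : IsCatenoidProfile n I c) (heven : ∀ t ∈ I, c (-t) = c t)
    {t : ℝ} (ht : t ∈ I) : verticalField c (-t) = -verticalField c t := by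
  have hcomp : (fun s => c (-s)) =ᶠ[𝓝 t] c := by
    filter_upwards [h.isOpen.mem_nhds ht] with s hs using heven s hs
  have hodd : deriv c (-t) = -deriv c t := by
    rw [← hcomp.deriv_eq, deriv_comp_neg, neg_neg]
  rw [verticalField, verticalField, hodd, neg_sq, neg_div]

theorem strictMonoOn_verticalField (h : IsCatenoidProfile n I c) :
    StrictMonoOn (verticalField c) I :=
  verticalField_eq_sin_arctan c ▸ Real.sin_arctan_strictMono.comp_strictMonoOn h.strictMonoOn_deriv

theorem continuousOn_verticalField (h : IsCatenoidProfile n I c) :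
    ContinuousOn (verticalField c) I :=
  verticalField_eq_sin_arctan c ▸
    (Real.continuous_sin.comp Real.continuous_arctan).comp_continuousOn h.continuousOn_deriv

theorem verticalField_nonneg (h : IsCatenoidProfile n I c) {t : ℝ} (ht : t ∈ I ∩ Ici 0) :
    0 ≤ verticalField c t :=
  h.verticalField_zero ▸ h.strictMonoOn_verticalField.monotoneOn h.zero_mem ht.1 ht.2

theorem tendsto_verticalField (h : IsCatenoidProfile n (Metric.eball 0 (catenoidHeight n)) c) :
    Tendsto (verticalField c) (rightEnd (Metric.eball 0 (catenoidHeight n))) (𝓝 1) := by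
  have hexp : (2 : ℤ) - 2 * n < 0 := by have := h.two_le; lia
  have hzpow := (tendsto_zpow_atTop_zero hexp).comp h.tendsto_rightEnd_atTop
  have hsqrt : Tendsto (fun t => √(1 - c t ^ ((2 : ℤ) - 2 * n)))
      (rightEnd (Metric.eball 0 (catenoidHeight n))) (𝓝 1) := by
    simpa using (hzpow.const_sub 1).sqrt
  obtain ⟨s, ⟨hs, hs₀⟩, -⟩ := h.exists_lt_apply 0
  refine hsqrt.congr' ?_
  filter_upwards [eventually_mem_rightEnd hs] with t ⟨ht, hst⟩
  rw [h.verticalField_eq ht, Real.sign_of_pos (hs₀.out.trans_le hst), one_mul]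

end VerticalField

section VariationField

theorem variationField_zero (h : IsCatenoidProfile n I c) : variationField n c 0 = -1 := by
  simp [variationField, h.apply_zero]

theorem variationField_neg (h : IsCatenoidProfile n I c) (heven : ∀ t ∈ I, c (-t) = c t)
    {t : ℝ} (ht : t ∈ I) : variationField n c (-t) = variationField n c t := by
  rw [variationField, variationField, h.verticalField_neg heven ht, heven t ht, neg_mul_neg]

theorem continuousOn_variationField (h : IsCatenoidProfile n I c) :
    ContinuousOn (variationField n c) I :=
  (h.contDiffOn.continuousOn.zpow₀ _ fun _ ht => .inl (h.pos ht).ne').neg.add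
    (continuousOn_id.mul h.continuousOn_verticalField)

theorem strictMonoOn_variationField (h : IsCatenoidProfile n I c) :
    StrictMonoOn (variationField n c) (I ∩ Ici 0) := by
  intro s hs t ht hst
  have hexp : (2 : ℤ) - n ≤ 0 := by have := h.two_le; lia
  have hzpow : c t ^ ((2 : ℤ) - n) ≤ c s ^ ((2 : ℤ) - n) :=
    zpow_le_zpow_left_of_nonpos hexp (h.pos hs.1) (h.strictMonoOn hs ht hst).le
  have hmul : s * verticalField c s < t * verticalField c t :=
    mul_lt_mul'' hst (h.strictMonoOn_verticalField hs.1 ht.1 hst) hs.2 (h.verticalField_nonneg hs)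
  exact add_lt_add_of_le_of_lt (neg_le_neg hzpow) hmul

theorem tendsto_variationField (hn : 3 ≤ n)
    (h : IsCatenoidProfile n (Metric.eball 0 (catenoidHeight n)) c) :
    Tendsto (variationField n c) (𝓝[<] (catenoidHeight n).toReal)
      (𝓝 (catenoidHeight n).toReal) := by
  have hend := rightEnd_eball (catenoidHeight_pos h.two_le) (catenoidHeight_lt_top hn).ne
  have hexp : (2 : ℤ) - n < 0 := by lia
  have hzpow := (tendsto_zpow_atTop_zero hexp).comp h.tendsto_rightEnd_atTop
  have hv := h.tendsto_verticalField
  rw [hend] at hzpow hv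
  have hlim := hzpow.neg.add ((tendsto_id.mono_left nhdsWithin_le_nhds).mul hv)
  rwa [neg_zero, zero_add, mul_one] at hlim

theorem tendsto_variationField_two
    (h : IsCatenoidProfile 2 (Metric.eball 0 (catenoidHeight 2)) c) :
    Tendsto (variationField 2 c) atTop atTop := by
  have hv := h.tendsto_verticalField
  rw [catenoidHeight_two, rightEnd_eball_top] at hv
  have hmul := tendsto_id.atTop_mul_pos one_pos hv
  refine (tendsto_atTop_add_const_left _ (-1) hmul).congr fun t => ?_
  simp [variationField]

theorem exists_variationField_pos
    (h : IsCatenoidProfile n (Metric.eball 0 (catenoidHeight n)) c) :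
    ∃ t ∈ Metric.eball 0 (catenoidHeight n) ∩ Ici 0, 0 < variationField n c t := by
  rcases h.two_le.eq_or_lt with rfl | hn
  · have hpos := h.tendsto_variationField_two.eventually_gt_atTop 0
    obtain ⟨t, ht, ht₀⟩ := (hpos.and (eventually_ge_atTop 0)).exists
    exact ⟨t, ⟨by simp [catenoidHeight_two], ht₀⟩, ht⟩
  · have hT := (catenoidHeight_lt_top hn).ne
    have hTpos := catenoidHeight_pos h.two_le
    have hpos := (h.tendsto_variationField hn).eventually_const_lt (ENNReal.toReal_pos hTpos.ne' hT)
    have hmem := eventually_mem_rightEnd h.zero_mem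
    rw [rightEnd_eball hTpos hT] at hmem
    obtain ⟨t, het, ht⟩ := (hpos.and hmem).exists
    exact ⟨t, ht, het⟩

theorem existsUnique_variationField_eq_zero
    (h : IsCatenoidProfile n (Metric.eball 0 (catenoidHeight n)) c) :
    ∃! z, z ∈ Metric.eball 0 (catenoidHeight n) ∩ Ioi 0 ∧ variationField n c z = 0 := by
  obtain ⟨b, ⟨hb, hb₀⟩, heb⟩ := h.exists_variationField_pos
  have hsub := h.convex.ordConnected.out h.zero_mem hb
  obtain ⟨z, hz, hez⟩ := intermediate_value_Ioo hb₀ (h.continuousOn_variationField.mono hsub)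
    (show (0 : ℝ) ∈ Ioo _ _ from ⟨by simp [h.variationField_zero], heb⟩)
  have hzI := hsub (Ioo_subset_Icc_self hz)
  refine ⟨z, ⟨⟨hzI, hz.1⟩, hez⟩, fun t ⟨ht, het⟩ => ?_⟩
  exact h.strictMonoOn_variationField.injOn ⟨ht.1, ht.2.out.le⟩ ⟨hzI, hz.1.le⟩ (het.trans hez.symm)

end VariationField

end IsCatenoidProfile

/-- Properties of the vertical Jacobi field `v = c'(1+c'²)^{−1/2}` and the variation Jacobi
field `e = −c^{2−n} + t·v` on the `n`-catenoid in `ℝ^{n+1}`: `v` is odd with the explicit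
formula `sgn(t)·(1 − c^{2−2n})^{1/2}` and tends to `1` at `T_n`; `e` is even, `e(0) = −1`,
tends to `T_n` (when `n ≥ 3`), and has exactly one zero in `(0, T_n)`. -/
theorem stmt7 (n : ℕ) (hn : 2 ≤ n)
    (T : ℝ≥0∞)
    (hT : T = ∫⁻ u in Set.Ioi (1:ℝ), ENNReal.ofReal ((u ^ (2*n-2) - 1) ^ (-(1:ℝ)/2)))
    (I : Set ℝ) (hI : I = {t : ℝ | ENNReal.ofReal |t| < T})
    (c : ℝ → ℝ)
    (hc : ContDiffOn ℝ (⊤ : ℕ∞) c I)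
    (hceven : ∀ t ∈ I, c (-t) = c t)
    (hc0 : c 0 = 1) (hc0' : deriv c 0 = 0)
    (hode : ∀ t ∈ I, c t * deriv (deriv c) t = (n - 1 : ℝ) * (1 + (deriv c t) ^ 2))
    (v e : ℝ → ℝ)
    (hv : ∀ t, v t = deriv c t / Real.sqrt (1 + (deriv c t) ^ 2))
    (he : ∀ t, e t = -(c t ^ ((2:ℤ) - n)) + t * v t) :
    (∀ t ∈ I, v (-t) = -v t) ∧
    (∀ t ∈ I, v t = Real.sign t * Real.sqrt (1 - c t ^ ((2:ℤ) - 2*n))) ∧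
    v 0 = 0 ∧
    (T = ⊤ → Filter.Tendsto v Filter.atTop (𝓝 1)) ∧
    (T ≠ ⊤ → Filter.Tendsto v (𝓝[<] T.toReal) (𝓝 1)) ∧
    (∀ t ∈ I, e (-t) = e t) ∧
    e 0 = -1 ∧
    (3 ≤ n → Filter.Tendsto e (𝓝[<] T.toReal) (𝓝 T.toReal)) ∧
    (∃ z ∈ I, 0 < z ∧ e z = 0 ∧ ∀ t ∈ I, 0 < t → e t = 0 → t = z) := by
  obtain rfl : v = verticalField c := funext hv
  obtain rfl : e = variationField n c := funext he
  obtain rfl : T = catenoidHeight n := hT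
  have hT₀ := catenoidHeight_pos hn
  obtain rfl : I = Metric.eball 0 (catenoidHeight n) := by
    ext t
    rw [hI, mem_ofPred_eq, Metric.mem_eball, edist_zero_right, Real.enorm_eq_ofReal_abs]
  have h : IsCatenoidProfile n (Metric.eball 0 (catenoidHeight n)) c :=
    ⟨hn, Metric.isOpen_eball, convex_eball _ _, Metric.mem_eball_self hT₀,
      hc.of_le (by norm_cast), hc0, hc0', hode⟩
  have hv_lim := h.tendsto_verticalField
  refine ⟨fun _ => h.verticalField_neg hceven, fun _ => h.verticalField_eq, h.verticalField_zero,
    fun hT => ?_, fun hT => rightEnd_eball hT₀ hT ▸ hv_lim, fun _ => h.variationField_neg hceven,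
    h.variationField_zero, h.tendsto_variationField, ?_⟩
  · rwa [hT, rightEnd_eball_top] at hv_lim
  · obtain ⟨z, ⟨⟨hz, hz₀⟩, hez⟩, huniq⟩ := h.existsUnique_variationField_eq_zero
    exact ⟨z, hz, hz₀, hez, fun t ht ht₀ het => huniq t ⟨⟨ht, ht₀⟩, het⟩⟩
end

section
/- Let n ≥ 2 be an integer and a > 0. Set T(a) = sinh^{n−1}(a)·∫_a^∞ (sinh^{2n−2}(u) − sinh^{2n−2}(a))^{−1/2} du. Then T(a) is finite, and the Cauchy problem sinh(f)·f'' = (n−1)·cosh(f)·(1 + f'²), f(0) = a, f'(0) = 0, has a maximal solution f(a,·) defined exactly on (−T(a), T(a)); this solution is a smooth even function of t satisfying: sinh^{n−1}(f(a,t))·(1 + f_t(a,t)²)^{−1/2} = sinh^{n−1}(a) for all t; f(a,t) ≥ a for all t; f_t(a,t) has the sign of t; f(a,t) → ∞ as t → T(a); and for t ∈ [0, T(a)), t = sinh^{n−1}(a)·∫_a^{f(a,t)} (sinh^{2n−2}(u) − sinh^{2n−2}(a))^{−1/2} du. -/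
open Real MeasureTheory Set Filter Topology

/-!
Put `f' = sinh s`. With `p = n - 1`, the equation becomes the first-order system
`f' = sinh s`, `s' = p · coth f · cosh s`, along which `sinh f ^ p / cosh s` is constant. Hence
`sinh f = sinh a · (cosh s) ^ (1 / p)`: the profile is explicit in the parameter `s ∈ ℝ`, and
`dt/ds = sinh f / (p · cosh s · cosh f)` is even, positive and at most `(2 / p) · e ^ (-|s|)`. So
`t` is a smooth odd diffeomorphism from `ℝ` onto a bounded interval, and every solution is a piece
of this curve. The substitution `u = f(s)`, which desingularises the integrand at `u = a`,
identifies the half-length of the interval with `T(a)`.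
-/

theorem exp_le_two_mul_cosh (x : ℝ) : exp x ≤ 2 * cosh x := by
  rw [cosh_eq]
  linarith [exp_pos (-x)]

theorem tendsto_cosh_atTop : Tendsto cosh atTop atTop :=
  tendsto_atTop_mono (fun x => (div_le_iff₀' two_pos).2 (exp_le_two_mul_cosh x))
    (tendsto_exp_atTop.atTop_div_const two_pos)

theorem tendsto_arsinh_atTop : Tendsto arsinh atTop atTop :=
  sinhOrderIso.symm.tendsto_atTop

theorem rpow_natCast_sub_one {n : ℕ} (hn : 1 ≤ n) (x : ℝ) :
    x ^ ((n : ℝ) - 1) = x ^ (n - 1) := by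
  rw [← rpow_natCast, Nat.cast_sub hn, Nat.cast_one]

theorem rpow_two_mul_natCast_sub_one {n : ℕ} (hn : 1 ≤ n) (x : ℝ) :
    x ^ (2 * ((n : ℝ) - 1)) = x ^ (2 * n - 2) := by
  rw [← rpow_natCast, Nat.cast_sub (by lia)]
  push_cast
  ring_nf

theorem sign_apply_of_strictMono {f : ℝ → ℝ} (hf : StrictMono f) (h0 : f 0 = 0) (x : ℝ) :
    Real.sign (f x) = Real.sign x := by
  rcases lt_trichotomy x 0 with hx | rfl | hx
  · rw [sign_of_neg hx, sign_of_neg (h0 ▸ hf hx)]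
  · rw [h0]
  · rw [sign_of_pos hx, sign_of_pos (h0 ▸ hf hx)]

theorem range_eq_Ioo_of_strictMono {α β : Type*} [LinearOrder α] [TopologicalSpace α]
    [PreconnectedSpace α] [Nonempty α] [NoMinOrder α] [NoMaxOrder α] [LinearOrder β]
    [TopologicalSpace β] [OrderTopology β] {f : α → β} {l u : β} (hc : Continuous f)
    (hf : StrictMono f) (hl : Tendsto f atBot (𝓝 l)) (hu : Tendsto f atTop (𝓝 u)) :
    range f = Ioo l u := by
  refine Subset.antisymm (range_subset_iff.2 fun x => ⟨?_, ?_⟩) fun y hy => ?_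
  · obtain ⟨w, hw⟩ := exists_lt x
    exact (hf.monotone.le_of_tendsto hl w).trans_lt (hf hw)
  · obtain ⟨w, hw⟩ := exists_gt x
    exact (hf hw).trans_le (hf.monotone.ge_of_tendsto hu w)
  · exact mem_range_of_exists_le_of_exists_ge hc
      ((hl.eventually (gt_mem_nhds hy.1)).exists.imp fun _ => le_of_lt)
      ((hu.eventually (lt_mem_nhds hy.2)).exists.imp fun _ => le_of_lt)

theorem contDiffAt_of_eventually_leftInverse {𝕜 : Type*} [RCLike 𝕜] {n : WithTop ℕ∞}
    {f g : 𝕜 → 𝕜} {f' x : 𝕜} (hf : ContDiffAt 𝕜 n f x) (hf' : HasDerivAt f f' x) (h0 : f' ≠ 0)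
    (hn : n ≠ 0) (hg : ∀ᶠ y in 𝓝 x, g (f y) = y) : ContDiffAt 𝕜 n g (f x) := by
  have hd := hf'.hasFDerivAt_equiv h0
  exact (hf.to_localInverse hd hn).congr_of_eventuallyEq
    ((hf.hasStrictFDerivAt' hd hn).localInverse_unique hg)

namespace Catenoid

/-- The distance to the axis at the point of the catenoid profile whose slope is `f' = sinh s`;
`a` is the neck radius and `p` stands for `n - 1`. -/
noncomputable def radius (p a s : ℝ) : ℝ :=
  arsinh (sinh a * cosh s ^ p⁻¹)

/-- The derivative `dt/ds` of the height along the profile, where `f' = sinh s`. -/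
noncomputable def heightDeriv (p a s : ℝ) : ℝ :=
  sinh (radius p a s) / (p * cosh s * cosh (radius p a s))

/-- The height `t` at the point of the profile whose slope is `f' = sinh s`. -/
noncomputable def height (p a s : ℝ) : ℝ :=
  ∫ x in (0 : ℝ)..s, heightDeriv p a x

/-- Half the total height of the catenoid, in the parameter `s`; it equals `T(a)` by
`rpow_mul_integral_Ioi_integrand`. -/
noncomputable def halfHeight (p a : ℝ) : ℝ :=
  ∫ s in Ioi (0 : ℝ), heightDeriv p a s

/-- The integrand of `T(a)`. -/
noncomputable def integrand (p a u : ℝ) : ℝ :=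
  (sinh u ^ (2 * p) - sinh a ^ (2 * p)) ^ (-(1 : ℝ) / 2)

/-- The parameter `s` with `f' = sinh s` as a function of the height; its values outside
`(-halfHeight p a, halfHeight p a)` are junk. -/
noncomputable def rapidity (p a : ℝ) : ℝ → ℝ :=
  Function.invFun (height p a)

/-- The generating curve `t ↦ f(a, t)` of the catenoid; its values outside
`(-halfHeight p a, halfHeight p a)` are junk. -/
noncomputable def profile (p a t : ℝ) : ℝ :=
  radius p a (rapidity p a t)

/-- `g` is twice differentiable on `J` and solves the Cauchy problem of the catenoid there. -/
structure IsSolutionOn (p a : ℝ) (g : ℝ → ℝ) (J : Set ℝ) : Prop where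
  differentiableAt : ∀ t ∈ J, DifferentiableAt ℝ g t
  differentiableAt_deriv : ∀ t ∈ J, DifferentiableAt ℝ (deriv g) t
  apply_zero : g 0 = a
  deriv_zero : deriv g 0 = 0
  ode : ∀ t ∈ J, sinh (g t) * deriv (deriv g) t = p * cosh (g t) * (1 + deriv g t ^ 2)

variable {p a s t : ℝ}

section Radius

theorem sinh_radius (p a s : ℝ) : sinh (radius p a s) = sinh a * cosh s ^ p⁻¹ :=
  sinh_arsinh _

@[simp]
theorem radius_zero (p a : ℝ) : radius p a 0 = a := by
  simp [radius]

@[simp]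
theorem radius_neg (p a s : ℝ) : radius p a (-s) = radius p a s := by
  simp [radius]

theorem sinh_radius_rpow (hp : p ≠ 0) (ha : 0 ≤ a) (s : ℝ) :
    sinh (radius p a s) ^ p = sinh a ^ p * cosh s := by
  rw [sinh_radius, mul_rpow (sinh_nonneg_iff.2 ha) (rpow_nonneg (cosh_pos s).le _),
    rpow_inv_rpow (cosh_pos s).le hp]

theorem le_radius (hp : 0 ≤ p) (ha : 0 ≤ a) (s : ℝ) : a ≤ radius p a s := by
  rw [← sinh_le_sinh, sinh_radius]
  exact le_mul_of_one_le_right (sinh_nonneg_iff.2 ha)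
    (one_le_rpow (one_le_cosh s) (inv_nonneg.2 hp))

theorem sinh_radius_pos (ha : 0 < a) (s : ℝ) : 0 < sinh (radius p a s) := by
  rw [sinh_radius]
  exact mul_pos (sinh_pos_iff.2 ha) (rpow_pos_of_pos (cosh_pos s) _)

theorem strictMonoOn_radius (hp : 0 < p) (ha : 0 < a) : StrictMonoOn (radius p a) (Ici 0) := by
  intro s hs r hr hsr
  have hcosh : cosh s < cosh r := cosh_strictMonoOn hs hr hsr
  exact arsinh_strictMono (mul_lt_mul_of_pos_left
    (rpow_lt_rpow (cosh_pos s).le hcosh (inv_pos.2 hp)) (sinh_pos_iff.2 ha))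

theorem tendsto_radius_atTop (hp : 0 < p) (ha : 0 < a) : Tendsto (radius p a) atTop atTop :=
  tendsto_arsinh_atTop.comp <|
    ((tendsto_rpow_atTop (inv_pos.2 hp)).comp tendsto_cosh_atTop).const_mul_atTop
      (sinh_pos_iff.2 ha)

theorem contDiff_radius (p a : ℝ) {n : ℕ∞} : ContDiff ℝ n (radius p a) :=
  (contDiff_const.mul (contDiff_cosh.rpow_const_of_ne fun s => (cosh_pos s).ne')).arsinh

theorem hasDerivAt_radius (p a s : ℝ) :
    HasDerivAt (radius p a) (sinh s * heightDeriv p a s) s := by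
  have hpow : HasDerivAt (fun s => sinh a * cosh s ^ p⁻¹)
      (sinh a * (sinh s * p⁻¹ * cosh s ^ (p⁻¹ - 1))) s :=
    ((hasDerivAt_cosh s).rpow_const (.inl (cosh_pos s).ne')).const_mul _
  refine hpow.arsinh.congr_deriv ?_
  have hcosh : √(1 + (sinh a * cosh s ^ p⁻¹) ^ 2) = cosh (radius p a s) := (cosh_arsinh _).symm
  rw [hcosh, heightDeriv, sinh_radius, rpow_sub_one (cosh_pos s).ne', smul_eq_mul]
  ring

end Radius

section Height

@[simp]
theorem heightDeriv_neg (p a s : ℝ) : heightDeriv p a (-s) = heightDeriv p a s := by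
  simp [heightDeriv]

theorem heightDeriv_pos (hp : 0 < p) (ha : 0 < a) (s : ℝ) : 0 < heightDeriv p a s :=
  div_pos (sinh_radius_pos ha s) (mul_pos (mul_pos hp (cosh_pos s)) (cosh_pos _))

theorem contDiff_heightDeriv (hp : p ≠ 0) (a : ℝ) {n : ℕ∞} :
    ContDiff ℝ n (heightDeriv p a) :=
  (contDiff_radius p a).sinh.div
    ((contDiff_const.mul contDiff_cosh).mul (contDiff_radius p a).cosh)
    fun s => mul_ne_zero (mul_ne_zero hp (cosh_pos s).ne') (cosh_pos _).ne'

theorem heightDeriv_le (hp : 0 < p) (a s : ℝ) : heightDeriv p a s ≤ 2 / p * exp (-s) := by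
  have hexp : (cosh s)⁻¹ ≤ 2 * exp (-s) := by
    rw [inv_le_iff_one_le_mul₀ (cosh_pos s)]
    calc 1 = exp (-s) * exp s := by rw [← exp_add, neg_add_cancel, exp_zero]
      _ ≤ exp (-s) * (2 * cosh s) := by gcongr; exact exp_le_two_mul_cosh s
      _ = 2 * exp (-s) * cosh s := by ring
  calc heightDeriv p a s
      = p⁻¹ * (cosh s)⁻¹ * (sinh (radius p a s) / cosh (radius p a s)) := by
        rw [heightDeriv]; field_simp
    _ ≤ p⁻¹ * (cosh s)⁻¹ * 1 := by
        have := cosh_pos s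
        gcongr
        exact (div_le_one (cosh_pos _)).2 (sinh_lt_cosh _).le
    _ ≤ p⁻¹ * (2 * exp (-s)) := by rw [mul_one]; gcongr
    _ = 2 / p * exp (-s) := by ring

theorem integrableOn_heightDeriv (hp : 0 < p) (ha : 0 < a) :
    IntegrableOn (heightDeriv p a) (Ioi 0) := by
  refine ((integrableOn_exp_neg_Ioi 0).const_mul (2 / p)).mono'
    (contDiff_heightDeriv hp.ne' a (n := 0)).continuous.aestronglyMeasurable
    (ae_of_all _ fun s => ?_)
  rw [norm_of_nonneg (heightDeriv_pos hp ha s).le]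
  exact heightDeriv_le hp a s

@[simp]
theorem height_zero (p a : ℝ) : height p a 0 = 0 :=
  intervalIntegral.integral_same

@[simp]
theorem height_neg (p a s : ℝ) : height p a (-s) = -height p a s := by
  have h := intervalIntegral.integral_comp_neg (a := 0) (b := s) (heightDeriv p a)
  simp only [heightDeriv_neg, neg_zero] at h
  rw [height, height, h, intervalIntegral.integral_symm]

theorem hasStrictDerivAt_height (hp : p ≠ 0) (a s : ℝ) :
    HasStrictDerivAt (height p a) (heightDeriv p a s) s :=
  (contDiff_heightDeriv hp a (n := 0)).continuous.integral_hasStrictDerivAt 0 s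

theorem deriv_height (hp : p ≠ 0) (a : ℝ) : deriv (height p a) = heightDeriv p a :=
  funext fun s => (hasStrictDerivAt_height hp a s).hasDerivAt.deriv

theorem contDiff_height (hp : p ≠ 0) (a : ℝ) : ContDiff ℝ (⊤ : ℕ∞) (height p a) := by
  rw [contDiff_infty_iff_deriv, deriv_height hp]
  exact ⟨fun s => (hasStrictDerivAt_height hp a s).hasDerivAt.differentiableAt,
    contDiff_heightDeriv hp a⟩

theorem strictMono_height (hp : 0 < p) (ha : 0 < a) : StrictMono (height p a) :=
  strictMono_of_deriv_pos fun s => by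
    rw [deriv_height hp.ne']
    exact heightDeriv_pos hp ha s

theorem tendsto_height_atTop (hp : 0 < p) (ha : 0 < a) :
    Tendsto (height p a) atTop (𝓝 (halfHeight p a)) :=
  intervalIntegral_tendsto_integral_Ioi 0 (integrableOn_heightDeriv hp ha) tendsto_id

theorem tendsto_height_atBot (hp : 0 < p) (ha : 0 < a) :
    Tendsto (height p a) atBot (𝓝 (-halfHeight p a)) := by
  simpa [Function.comp_def] using ((tendsto_height_atTop hp ha).comp tendsto_neg_atBot_atTop).neg

theorem range_height (hp : 0 < p) (ha : 0 < a) :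
    range (height p a) = Ioo (-halfHeight p a) (halfHeight p a) :=
  range_eq_Ioo_of_strictMono (contDiff_height hp.ne' a).continuous (strictMono_height hp ha)
    (tendsto_height_atBot hp ha) (tendsto_height_atTop hp ha)

theorem height_mem_Ioo (hp : 0 < p) (ha : 0 < a) (s : ℝ) :
    height p a s ∈ Ioo (-halfHeight p a) (halfHeight p a) :=
  range_height hp ha ▸ mem_range_self s

theorem zero_mem_Ioo_halfHeight (hp : 0 < p) (ha : 0 < a) :
    (0 : ℝ) ∈ Ioo (-halfHeight p a) (halfHeight p a) :=
  height_zero p a ▸ height_mem_Ioo hp ha 0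

end Height

section Integrand

theorem deriv_radius_mul_integrand (hp : p ≠ 0) (ha : 0 < a) (hs : 0 < s) :
    sinh s * heightDeriv p a s * integrand p a (radius p a s)
      = (sinh a ^ p)⁻¹ * heightDeriv p a s := by
  have hneck : 0 < sinh a ^ p := rpow_pos_of_pos (sinh_pos_iff.2 ha) p
  have hsinh : 0 < sinh s := sinh_pos_iff.2 hs
  have rpow_two_mul {x : ℝ} (hx : 0 < x) : x ^ (2 * p) = (x ^ p) ^ 2 := by
    rw [mul_comm, rpow_mul hx.le, rpow_two]
  have hdiff : sinh (radius p a s) ^ (2 * p) - sinh a ^ (2 * p) = (sinh a ^ p * sinh s) ^ 2 := by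
    rw [rpow_two_mul (sinh_radius_pos ha s), rpow_two_mul (sinh_pos_iff.2 ha),
      sinh_radius_rpow hp ha.le, mul_pow, mul_pow, cosh_sq]
    ring
  have hvalue : integrand p a (radius p a s) = (sinh a ^ p * sinh s)⁻¹ := by
    rw [integrand, hdiff, ← rpow_two, ← rpow_mul (mul_pos hneck hsinh).le,
      mul_div_cancel₀ _ two_ne_zero, rpow_neg_one]
  rw [hvalue]
  field_simp

theorem image_radius_Ioi (hp : 0 < p) (ha : 0 < a) : radius p a '' Ioi 0 = Ioi a := by
  simpa using (contDiff_radius p a (n := 0)).continuous.continuousOn.image_Ioi_of_strictMonoOn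
    (strictMonoOn_radius hp ha) (tendsto_radius_atTop hp ha)

theorem integrableOn_integrand (hp : 0 < p) (ha : 0 < a) :
    IntegrableOn (integrand p a) (Ioi a) := by
  rw [← image_radius_Ioi hp ha, integrableOn_image_iff_integrableOn_deriv_smul_of_monotoneOn
    measurableSet_Ioi (fun s _ => (hasDerivAt_radius p a s).hasDerivWithinAt)
    ((strictMonoOn_radius hp ha).monotoneOn.mono Ioi_subset_Ici_self)]
  exact IntegrableOn.congr_fun ((integrableOn_heightDeriv hp ha).const_mul _)
    (fun s hs => (deriv_radius_mul_integrand hp.ne' ha hs).symm) measurableSet_Ioi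

theorem rpow_mul_integral_image_radius (hp : 0 < p) (ha : 0 < a) {S : Set ℝ}
    (hS : MeasurableSet S) (hS0 : S ⊆ Ioi 0) :
    sinh a ^ p * ∫ u in radius p a '' S, integrand p a u = ∫ s in S, heightDeriv p a s := by
  rw [integral_image_eq_integral_deriv_smul_of_monotoneOn hS
      (fun s _ => (hasDerivAt_radius p a s).hasDerivWithinAt)
      ((strictMonoOn_radius hp ha).monotoneOn.mono (hS0.trans Ioi_subset_Ici_self)),
    setIntegral_congr_fun hS fun s hs => (smul_eq_mul ..).trans
      (deriv_radius_mul_integrand hp.ne' ha (hS0 hs)), integral_const_mul,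
    mul_inv_cancel_left₀ (rpow_pos_of_pos (sinh_pos_iff.2 ha) p).ne']

theorem rpow_mul_integral_Ioi_integrand (hp : 0 < p) (ha : 0 < a) :
    sinh a ^ p * ∫ u in Ioi a, integrand p a u = halfHeight p a := by
  rw [← image_radius_Ioi hp ha, halfHeight]
  exact rpow_mul_integral_image_radius hp ha measurableSet_Ioi Subset.rfl

theorem rpow_mul_integral_integrand (hp : 0 < p) (ha : 0 < a) (hs : 0 ≤ s) :
    sinh a ^ p * ∫ u in a..radius p a s, integrand p a u = height p a s := by
  have himage : radius p a '' Ioo 0 s = Ioo a (radius p a s) := by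
    simpa using
      (contDiff_radius p a (n := 0)).continuous.continuousOn.image_Ioo_of_strictMonoOn hs
        ((strictMonoOn_radius hp ha).mono Icc_subset_Ici_self)
  rw [height, intervalIntegral.integral_of_le (le_radius hp.le ha.le s),
    intervalIntegral.integral_of_le hs, integral_Ioc_eq_integral_Ioo,
    integral_Ioc_eq_integral_Ioo, ← himage]
  exact rpow_mul_integral_image_radius hp ha measurableSet_Ioo Ioo_subset_Ioi_self

end Integrand

section Rapidity

theorem rapidity_height (hp : 0 < p) (ha : 0 < a) (s : ℝ) : rapidity p a (height p a s) = s :=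
  Function.leftInverse_invFun (strictMono_height hp ha).injective s

theorem height_rapidity (hp : 0 < p) (ha : 0 < a)
    (ht : t ∈ Ioo (-halfHeight p a) (halfHeight p a)) : height p a (rapidity p a t) = t :=
  Function.invFun_eq ((range_height hp ha).symm ▸ ht : t ∈ range (height p a))

theorem rapidity_zero (hp : 0 < p) (ha : 0 < a) : rapidity p a 0 = 0 := by
  simpa using rapidity_height hp ha 0

theorem rapidity_neg (hp : 0 < p) (ha : 0 < a)
    (ht : t ∈ Ioo (-halfHeight p a) (halfHeight p a)) :
    rapidity p a (-t) = -rapidity p a t := by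
  rw [← rapidity_height hp ha (-rapidity p a t), height_neg, height_rapidity hp ha ht]

theorem hasDerivAt_rapidity (hp : 0 < p) (ha : 0 < a)
    (ht : t ∈ Ioo (-halfHeight p a) (halfHeight p a)) :
    HasDerivAt (rapidity p a) (heightDeriv p a (rapidity p a t))⁻¹ t := by
  have h := (hasStrictDerivAt_height hp.ne' a (rapidity p a t)).to_local_left_inverse
    (heightDeriv_pos hp ha _).ne' (.of_forall (rapidity_height hp ha))
  rw [height_rapidity hp ha ht] at h
  exact h.hasDerivAt

theorem contDiffOn_rapidity (hp : 0 < p) (ha : 0 < a) :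
    ContDiffOn ℝ (⊤ : ℕ∞) (rapidity p a) (Ioo (-halfHeight p a) (halfHeight p a)) := by
  intro t ht
  have h := contDiffAt_of_eventually_leftInverse (contDiff_height hp.ne' a).contDiffAt
    (hasStrictDerivAt_height hp.ne' a (rapidity p a t)).hasDerivAt (heightDeriv_pos hp ha _).ne'
    (by simp) (.of_forall (rapidity_height hp ha))
  rw [height_rapidity hp ha ht] at h
  exact h.contDiffWithinAt

theorem tendsto_rapidity (hp : 0 < p) (ha : 0 < a) :
    Tendsto (rapidity p a) (𝓝[<] halfHeight p a) atTop := by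
  refine tendsto_atTop.2 fun s => ?_
  obtain ⟨hlower, hupper⟩ := height_mem_Ioo hp ha s
  filter_upwards [Ioo_mem_nhdsLT hupper] with t ht
  rw [← (strictMono_height hp ha).le_iff_le, height_rapidity hp ha ⟨hlower.trans ht.1, ht.2⟩]
  exact ht.1.le

end Rapidity

section Profile

theorem contDiffOn_profile (hp : 0 < p) (ha : 0 < a) :
    ContDiffOn ℝ (⊤ : ℕ∞) (profile p a) (Ioo (-halfHeight p a) (halfHeight p a)) :=
  (contDiff_radius p a).comp_contDiffOn (contDiffOn_rapidity hp ha)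

theorem profile_neg (hp : 0 < p) (ha : 0 < a)
    (ht : t ∈ Ioo (-halfHeight p a) (halfHeight p a)) : profile p a (-t) = profile p a t := by
  rw [profile, profile, rapidity_neg hp ha ht, radius_neg]

theorem hasDerivAt_profile (hp : 0 < p) (ha : 0 < a)
    (ht : t ∈ Ioo (-halfHeight p a) (halfHeight p a)) :
    HasDerivAt (profile p a) (sinh (rapidity p a t)) t := by
  have h := (hasDerivAt_radius p a (rapidity p a t)).comp t (hasDerivAt_rapidity hp ha ht)
  rwa [mul_inv_cancel_right₀ (heightDeriv_pos hp ha _).ne'] at h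

theorem hasDerivAt_deriv_profile (hp : 0 < p) (ha : 0 < a)
    (ht : t ∈ Ioo (-halfHeight p a) (halfHeight p a)) :
    HasDerivAt (deriv (profile p a))
      (cosh (rapidity p a t) * (heightDeriv p a (rapidity p a t))⁻¹) t := by
  refine (hasDerivAt_rapidity hp ha ht).sinh.congr_of_eventuallyEq ?_
  filter_upwards [isOpen_Ioo.mem_nhds ht] with x hx using (hasDerivAt_profile hp ha hx).deriv

theorem isSolutionOn_profile (hp : 0 < p) (ha : 0 < a) :
    IsSolutionOn p a (profile p a) (Ioo (-halfHeight p a) (halfHeight p a)) where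
  differentiableAt t ht := (hasDerivAt_profile hp ha ht).differentiableAt
  differentiableAt_deriv t ht := (hasDerivAt_deriv_profile hp ha ht).differentiableAt
  apply_zero := by rw [profile, rapidity_zero hp ha, radius_zero]
  deriv_zero := by
    rw [(hasDerivAt_profile hp ha (zero_mem_Ioo_halfHeight hp ha)).deriv, rapidity_zero hp ha,
      sinh_zero]
  ode t ht := by
    rw [(hasDerivAt_deriv_profile hp ha ht).deriv, (hasDerivAt_profile hp ha ht).deriv, add_comm,
      ← cosh_sq, heightDeriv, inv_div, profile]
    have hsinh := sinh_radius_pos (p := p) ha (rapidity p a t)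
    field_simp

theorem first_integral_profile (hp : 0 < p) (ha : 0 < a)
    (ht : t ∈ Ioo (-halfHeight p a) (halfHeight p a)) :
    sinh (profile p a t) ^ p / √(1 + deriv (profile p a) t ^ 2) = sinh a ^ p := by
  rw [(hasDerivAt_profile hp ha ht).deriv, add_comm, ← cosh_sq, sqrt_sq (cosh_pos _).le, profile,
    sinh_radius_rpow hp.ne' ha.le, mul_div_cancel_right₀ _ (cosh_pos _).ne']

theorem sign_deriv_profile (hp : 0 < p) (ha : 0 < a)
    (ht : t ∈ Ioo (-halfHeight p a) (halfHeight p a)) :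
    Real.sign (deriv (profile p a) t) = Real.sign t := by
  rw [(hasDerivAt_profile hp ha ht).deriv, sign_apply_of_strictMono sinh_strictMono sinh_zero,
    ← sign_apply_of_strictMono (strictMono_height hp ha) (height_zero p a),
    height_rapidity hp ha ht]

theorem tendsto_profile (hp : 0 < p) (ha : 0 < a) :
    Tendsto (profile p a) (𝓝[<] halfHeight p a) atTop :=
  (tendsto_radius_atTop hp ha).comp (tendsto_rapidity hp ha)

theorem rpow_mul_integral_profile (hp : 0 < p) (ha : 0 < a) (ht : t ∈ Ico 0 (halfHeight p a)) :
    sinh a ^ p * ∫ u in a..profile p a t, integrand p a u = t := by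
  have ht' : t ∈ Ioo (-halfHeight p a) (halfHeight p a) :=
    ⟨(zero_mem_Ioo_halfHeight hp ha).1.trans_le ht.1, ht.2⟩
  have hs : 0 ≤ rapidity p a t := by
    rw [← (strictMono_height hp ha).le_iff_le, height_zero, height_rapidity hp ha ht']
    exact ht.1
  rw [profile, rpow_mul_integral_integrand hp ha hs, height_rapidity hp ha ht']

end Profile

namespace IsSolutionOn

variable {g : ℝ → ℝ} {J : Set ℝ}

theorem ne_zero (hg : IsSolutionOn p a g J) (hp : p ≠ 0) (ht : t ∈ J) : g t ≠ 0 := by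
  intro h
  have hode := hg.ode t ht
  rw [h, sinh_zero, zero_mul, cosh_zero, mul_one] at hode
  exact mul_ne_zero hp (by positivity) hode.symm

theorem pos (hg : IsSolutionOn p a g J) (hp : p ≠ 0) (ha : 0 ≤ a) (hJ : IsPreconnected J)
    (h0 : 0 ∈ J) (ht : t ∈ J) : 0 < g t := by
  by_contra! hneg
  have hcont : ContinuousOn g J := fun x hx =>
    (hg.differentiableAt x hx).continuousAt.continuousWithinAt
  obtain ⟨x, hx, hx0⟩ := hJ.intermediate_value ht h0 hcont ⟨hneg, ha.trans_eq hg.apply_zero.symm⟩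
  exact hg.ne_zero hp hx hx0

theorem hasDerivAt_arsinh_deriv (hg : IsSolutionOn p a g J) (ht : t ∈ J) (h0 : g t ≠ 0) :
    HasDerivAt (fun t => arsinh (deriv g t))
      (p * cosh (g t) * cosh (arsinh (deriv g t)) / sinh (g t)) t := by
  refine (hg.differentiableAt_deriv t ht).hasDerivAt.arsinh.congr_deriv ?_
  have hode := hg.ode t ht
  rw [← sq_sqrt (show 0 ≤ 1 + deriv g t ^ 2 by positivity)] at hode
  have hsqrt : √(1 + deriv g t ^ 2) ≠ 0 := (sqrt_pos.2 (by positivity)).ne'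
  have hsinh : sinh (g t) ≠ 0 := sinh_ne_zero.2 h0
  rw [cosh_arsinh, smul_eq_mul]
  field_simp
  linear_combination hode

theorem mul_log_sinh_sub_log_cosh (hg : IsSolutionOn p a g J) (hp : p ≠ 0) (ha : 0 ≤ a)
    (hJ : IsOpen J) (hJ' : IsPreconnected J) (h0 : 0 ∈ J) (ht : t ∈ J) :
    p * log (sinh (g t)) - log (cosh (arsinh (deriv g t))) = p * log (sinh a) := by
  have hderiv : ∀ x ∈ J, HasDerivAt
      (fun x => p * log (sinh (g x)) - log (cosh (arsinh (deriv g x)))) 0 x := by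
    intro x hx
    have hpos := hg.pos hp ha hJ' h0 hx
    have hsinh : sinh (g x) ≠ 0 := (sinh_pos_iff.2 hpos).ne'
    have hcosh := (cosh_pos (arsinh (deriv g x))).ne'
    refine ((((hg.differentiableAt x hx).hasDerivAt.sinh.log hsinh).const_mul p).sub
      ((hg.hasDerivAt_arsinh_deriv hx hpos.ne').cosh.log hcosh)).congr_deriv ?_
    rw [sinh_arsinh]
    field_simp
    ring
  rw [hJ.is_const_of_deriv_eq_zero hJ'
    (fun x hx => (hderiv x hx).differentiableAt.differentiableWithinAt)
    (fun x hx => (hderiv x hx).deriv) ht h0]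
  simp [hg.apply_zero, hg.deriv_zero]

theorem eq_radius (hg : IsSolutionOn p a g J) (hp : p ≠ 0) (ha : 0 < a) (hJ : IsOpen J)
    (hJ' : IsPreconnected J) (h0 : 0 ∈ J) (ht : t ∈ J) :
    g t = radius p a (arsinh (deriv g t)) := by
  have hcosh := cosh_pos (arsinh (deriv g t))
  have hneck := sinh_pos_iff.2 ha
  rw [← sinh_inj, sinh_radius]
  refine log_injOn_pos (sinh_pos_iff.2 (hg.pos hp ha.le hJ' h0 ht))
    (mul_pos hneck (rpow_pos_of_pos hcosh _)) ?_
  rw [log_mul hneck.ne' (rpow_pos_of_pos hcosh _).ne', log_rpow hcosh]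
  field_simp
  linear_combination hg.mul_log_sinh_sub_log_cosh hp ha.le hJ hJ' h0 ht

theorem height_arsinh_deriv (hg : IsSolutionOn p a g J) (hp : p ≠ 0) (ha : 0 < a)
    (hJ : IsOpen J) (hJ' : IsPreconnected J) (h0 : 0 ∈ J) (ht : t ∈ J) :
    height p a (arsinh (deriv g t)) = t := by
  have hderiv : ∀ x ∈ J, HasDerivAt (fun x => height p a (arsinh (deriv g x))) 1 x := by
    intro x hx
    have hpos := hg.pos hp ha.le hJ' h0 hx
    have := sinh_pos_iff.2 hpos
    refine ((hasStrictDerivAt_height hp a _).hasDerivAt.comp x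
      (hg.hasDerivAt_arsinh_deriv hx hpos.ne')).congr_deriv ?_
    rw [heightDeriv, ← hg.eq_radius hp ha hJ hJ' h0 hx]
    have := cosh_pos (arsinh (deriv g x))
    field_simp
  refine hJ.eqOn_of_deriv_eq hJ'
    (fun x hx => (hderiv x hx).differentiableAt.differentiableWithinAt) differentiableOn_id
    (fun x hx => ?_) h0 ?_ ht
  · rw [(hderiv x hx).deriv, deriv_id]
  · simp [hg.deriv_zero]

theorem subset_Ioo (hg : IsSolutionOn p a g J) (hp : 0 < p) (ha : 0 < a) (hJ : IsOpen J)
    (hJ' : IsPreconnected J) (h0 : 0 ∈ J) : J ⊆ Ioo (-halfHeight p a) (halfHeight p a) :=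
  fun _ ht => hg.height_arsinh_deriv hp.ne' ha hJ hJ' h0 ht ▸ height_mem_Ioo hp ha _

end IsSolutionOn

end Catenoid

open Catenoid in
theorem stmt12_general {p a T : ℝ} (hp : 0 < p) (ha : 0 < a)
    (hT : T = sinh a ^ p *
      ∫ u in Ioi a, (sinh u ^ (2 * p) - sinh a ^ (2 * p)) ^ (-(1 : ℝ) / 2)) :
    IntegrableOn (fun u => (sinh u ^ (2 * p) - sinh a ^ (2 * p)) ^ (-(1 : ℝ) / 2)) (Ioi a) ∧
    ∃ f : ℝ → ℝ,
      ContDiffOn ℝ (⊤ : ℕ∞) f (Ioo (-T) T) ∧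
      (∀ t ∈ Ioo (-T) T, f (-t) = f t) ∧
      f 0 = a ∧ deriv f 0 = 0 ∧
      (∀ t ∈ Ioo (-T) T,
        sinh (f t) * deriv (deriv f) t = p * cosh (f t) * (1 + deriv f t ^ 2)) ∧
      (∀ t ∈ Ioo (-T) T, sinh (f t) ^ p / √(1 + deriv f t ^ 2) = sinh a ^ p) ∧
      (∀ t ∈ Ioo (-T) T, a ≤ f t) ∧
      (∀ t ∈ Ioo (-T) T, Real.sign (deriv f t) = Real.sign t) ∧
      Tendsto f (𝓝[<] T) atTop ∧
      (∀ t ∈ Ico 0 T,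
        t = sinh a ^ p *
          ∫ u in a..f t, (sinh u ^ (2 * p) - sinh a ^ (2 * p)) ^ (-(1 : ℝ) / 2)) ∧
      (∀ J : Set ℝ, IsOpen J → J.OrdConnected → (0 : ℝ) ∈ J →
        ∀ g : ℝ → ℝ,
          (∀ t ∈ J, DifferentiableAt ℝ g t) →
          (∀ t ∈ J, DifferentiableAt ℝ (deriv g) t) →
          g 0 = a → deriv g 0 = 0 →
          (∀ t ∈ J, sinh (g t) * deriv (deriv g) t = p * cosh (g t) * (1 + deriv g t ^ 2)) →
          J ⊆ Ioo (-T) T) := by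
  obtain rfl : T = halfHeight p a := hT.trans (rpow_mul_integral_Ioi_integrand hp ha)
  have hsol := isSolutionOn_profile hp ha
  exact ⟨integrableOn_integrand hp ha, profile p a, contDiffOn_profile hp ha,
    fun t ht => profile_neg hp ha ht, hsol.apply_zero, hsol.deriv_zero, hsol.ode,
    fun t ht => first_integral_profile hp ha ht, fun t _ => le_radius hp.le ha.le _,
    fun t ht => sign_deriv_profile hp ha ht, tendsto_profile hp ha,
    fun t ht => (rpow_mul_integral_profile hp ha ht).symm,
    fun J hJ hJ' h0 g hg hg' hga hg0 hode =>
      IsSolutionOn.subset_Ioo ⟨hg, hg', hga, hg0, hode⟩ hp ha hJ hJ'.isPreconnected h0⟩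

/-- The profile of the minimal catenoid in `ℍⁿ × ℝ`: the Cauchy problem
`sinh(f)f'' = (n−1)cosh(f)(1+f'²)`, `f(0) = a`, `f'(0) = 0` has a maximal solution defined
exactly on `(−T(a), T(a))` with `T(a) = sinh^{n−1}(a)·∫_a^∞ (sinh^{2n−2}u − sinh^{2n−2}a)^{−1/2} du`
finite, the solution being smooth, even, `≥ a`, with first integral
`sinh^{n−1}(f)(1+f'²)^{−1/2} = sinh^{n−1}(a)`, `f' ` of the sign of `t`, blowing up at `T(a)`. -/
theorem stmt12 (n : ℕ) (hn : 2 ≤ n) (a : ℝ) (ha : 0 < a)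
    (T : ℝ)
    (hT : T = Real.sinh a ^ (n-1) *
      ∫ u in Set.Ioi a, (Real.sinh u ^ (2*n-2) - Real.sinh a ^ (2*n-2)) ^ (-(1:ℝ)/2)) :
    MeasureTheory.IntegrableOn
      (fun u => (Real.sinh u ^ (2*n-2) - Real.sinh a ^ (2*n-2)) ^ (-(1:ℝ)/2)) (Set.Ioi a) ∧
    ∃ f : ℝ → ℝ,
      ContDiffOn ℝ (⊤ : ℕ∞) f (Set.Ioo (-T) T) ∧
      (∀ t ∈ Set.Ioo (-T) T, f (-t) = f t) ∧
      f 0 = a ∧ deriv f 0 = 0 ∧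
      (∀ t ∈ Set.Ioo (-T) T,
        Real.sinh (f t) * deriv (deriv f) t
          = (n - 1 : ℝ) * Real.cosh (f t) * (1 + (deriv f t) ^ 2)) ∧
      (∀ t ∈ Set.Ioo (-T) T,
        Real.sinh (f t) ^ (n-1) / Real.sqrt (1 + (deriv f t) ^ 2) = Real.sinh a ^ (n-1)) ∧
      (∀ t ∈ Set.Ioo (-T) T, a ≤ f t) ∧
      (∀ t ∈ Set.Ioo (-T) T, Real.sign (deriv f t) = Real.sign t) ∧
      Filter.Tendsto f (𝓝[<] T) Filter.atTop ∧
      (∀ t ∈ Set.Ico 0 T,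
        t = Real.sinh a ^ (n-1) *
          ∫ u in a..(f t), (Real.sinh u ^ (2*n-2) - Real.sinh a ^ (2*n-2)) ^ (-(1:ℝ)/2)) ∧
      (∀ J : Set ℝ, IsOpen J → J.OrdConnected → (0:ℝ) ∈ J →
        ∀ g : ℝ → ℝ,
          (∀ t ∈ J, DifferentiableAt ℝ g t) →
          (∀ t ∈ J, DifferentiableAt ℝ (deriv g) t) →
          g 0 = a → deriv g 0 = 0 →
          (∀ t ∈ J, Real.sinh (g t) * deriv (deriv g) t
            = (n - 1 : ℝ) * Real.cosh (g t) * (1 + (deriv g t) ^ 2)) →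
          J ⊆ Set.Ioo (-T) T) := by
  simp only [← rpow_natCast_sub_one (one_le_two.trans hn),
    ← rpow_two_mul_natCast_sub_one (one_le_two.trans hn)] at hT ⊢
  exact stmt12_general (sub_pos.2 (by exact_mod_cast hn)) ha hT
end
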